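/- arXiv:1409.4402 — 9 statements merged into one kernel-verified Lean document; each statement's English description precedes it below -/
import Mathlib

section
/- Let λ ∈ (0, 1/2] and let f : ℝ → ℝ be C² with f'(0) ≥ 0, with f'' globally Lipschitz, and with |f''| uniformly bounded. Let Ω = {(Y,T) ∈ ℝ² : T ≥ 0, Y ≥ −f'(0) T}. For a C¹ function w₀ : [0,∞) → ℝ with w₀(0) = 0 and w₀'(0) = 0, define data for the semi-linear system by: Y(x) = ∫₀^x (1 + (w₀'(x'))²)^{1/(2λ)} dx' (a strictly increasing bijection of [0,∞) onto itself with inverse x(·)), ū(Y) = w₀(x(Y)), v̄(Y) = 2 arctan(w₀'(x(Y))), ξ̄(Y) = 1, with boundary values (0,0,1) on Y = −f'(0)T, and let (u, v, ξ) be the corresponding unique solution of the system u_Y = (1/2) ξ sin v (cos²(v/2))^{1/(2λ)−1}, v_T = −2λ f''(u) sin²(v/2), ξ_T = (1/2) f''(u) ξ sin v on Ω. If u₀^k is a sequence of such C¹ functions with u₀^k → u₀ and (u₀^k)' → u₀' uniformly on every bounded subset of [0,∞), then the corresponding solutions satisfy (u^k, v^k, ξ^k) → (u, v, ξ) uniformly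 on every bounded subset of Ω. -/
/-!
The system is extended from `Ω` to the half plane `T ≥ 0` by the constant state `(0,0,1)`, which
solves it (every right-hand side vanishes for `v = 0`), so the boundary ray disappears
(`hat`, `ExtSol`, `extSol_of_isSol`).

The integrated equations do not include integrability of the integrands, so it is established
first. For fixed `Y`, `T ↦ u(Y,T)` is measurable: the times at which the `z`-integrand of `u` is
measurable form a closed set, on which `u(Y,·)` is continuous and off which it vanishes
(`ExtSol.meas_u`). Hence `(v,ξ)` solves a genuine ODE in `T` on each vertical line, and by
continuous dependence `v` and `ξ` are continuous in `Y` (`ExtSol.cont_Y`); the `z`-integrand of `u`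
is then continuous.

Stability (`stability`) is a Grönwall argument in the norm weighted by `e^{-κT}`, uniformly over a
bounded `Y`-interval: `(v,ξ) ↦ u` is Lipschitz in the uniform norm because
`sin v (cos²(v/2))^p = 2 sin(v/2) · cos(v/2)|cos(v/2)|^{2p}` is Lipschitz in `v`
(`mul_sq_rpow_lip`, `gfun_lip`), and the `T`-evolution of `(v,ξ)` is Lipschitz because `ξ` is
bounded and `f''` is bounded and Lipschitz (`ode_compare`). Solutions are thus controlled by the
initial values of `v` alone. These converge uniformly (`Vof_conv`), because the coordinate changes
`Y(x)` converge locally uniformly and do not contract distances.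
-/

open Real Set MeasureTheory Filter

/-- The domain `Ω = {(Y,T) : T ≥ 0, Y ≥ −a T}` (with `a = f'(0) ≥ 0`). -/
def OmegaDom (a : ℝ) : Set (ℝ × ℝ) := {p : ℝ × ℝ | 0 ≤ p.2 ∧ -a * p.2 ≤ p.1}

/-- The starting time of the vertical segment of `Ω` over `Y`:
`T₀(Y) = 0` for `Y ≥ 0` and `T₀(Y) = −Y/a` for `Y < 0`. -/
noncomputable def T0 (a Y : ℝ) : ℝ := if 0 ≤ Y then 0 else -Y / a

/-- `(u,v,ξ)` is a solution of the semi-linear system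
`u_Y = (1/2) ξ sin v (cos²(v/2))^{1/(2λ)−1}`, `v_T = −2λ f''(u) sin²(v/2)`,
`ξ_T = (1/2) f''(u) ξ sin v` on `Ω = {T ≥ 0, Y ≥ −f'(0)T}` (equations taken in
integrated form), with initial data `(ū, v̄, 1)` on `{Y ≥ 0, T = 0}` and
boundary data `(0,0,1)` on the ray `Y = −f'(0)T`. -/
def IsSolSemilinear (lam : ℝ) (f : ℝ → ℝ) (ubar vbar : ℝ → ℝ)
    (u v ξ : ℝ → ℝ → ℝ) : Prop :=
  (∀ T : ℝ, 0 ≤ T → ∀ r : ℝ, ∃ K : NNReal,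
      LipschitzOnWith K (fun Y => u Y T) (Icc (-(deriv f 0) * T) r)) ∧
  (∀ Y : ℝ, ∀ r : ℝ, ∃ K : NNReal,
      LipschitzOnWith K (fun T => v Y T) (Icc (T0 (deriv f 0) Y) r) ∧
      LipschitzOnWith K (fun T => ξ Y T) (Icc (T0 (deriv f 0) Y) r)) ∧
  (∀ Y : ℝ, 0 ≤ Y → u Y 0 = ubar Y ∧ v Y 0 = vbar Y ∧ ξ Y 0 = 1) ∧
  (∀ T : ℝ, 0 ≤ T →
      u (-(deriv f 0) * T) T = 0 ∧ v (-(deriv f 0) * T) T = 0 ∧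
      ξ (-(deriv f 0) * T) T = 1) ∧
  (∀ p ∈ OmegaDom (deriv f 0),
      u p.1 p.2 = ∫ z in (-(deriv f 0) * p.2)..p.1,
        (1/2) * ξ z p.2 * sin (v z p.2) * (cos (v z p.2 / 2) ^ 2) ^ (1/(2*lam) - 1)) ∧
  (∀ p ∈ OmegaDom (deriv f 0),
      (v p.1 p.2 = v p.1 (T0 (deriv f 0) p.1)
        + ∫ s in (T0 (deriv f 0) p.1)..p.2,
            -2 * lam * deriv (deriv f) (u p.1 s) * sin (v p.1 s / 2) ^ 2) ∧
      (ξ p.1 p.2 = ξ p.1 (T0 (deriv f 0) p.1)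
        + ∫ s in (T0 (deriv f 0) p.1)..p.2,
            (1/2) * deriv (deriv f) (u p.1 s) * ξ p.1 s * sin (v p.1 s)))

/-- The energy-dependent coordinate change associated with `C¹` initial data
`w₀`: `Y(x) = ∫₀ˣ (1 + (w₀'(x'))²)^{1/(2λ)} dx'`. -/
noncomputable def Yfun (lam : ℝ) (w₀ : ℝ → ℝ) (x : ℝ) : ℝ :=
  ∫ y in (0:ℝ)..x, (1 + (deriv w₀ y) ^ 2) ^ (1/(2*lam))

/-- `(ū, v̄)` are the data for the semi-linear system obtained from the `C¹`
initial datum `w₀` through the coordinate change `Yfun`: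
`ū(Y(x)) = w₀(x)` and `v̄(Y(x)) = 2 arctan(w₀'(x))` for `x ≥ 0`. -/
def DataOf (lam : ℝ) (w₀ ubar vbar : ℝ → ℝ) : Prop :=
  ∀ x : ℝ, 0 ≤ x →
    ubar (Yfun lam w₀ x) = w₀ x ∧ vbar (Yfun lam w₀ x) = 2 * arctan (deriv w₀ x)

/-! ### The right-hand side of the `u` equation -/

lemma mul_sq_rpow_eq {p a : ℝ} (hp : 0 ≤ p) (ha : 0 ≤ a) : a * (a ^ 2) ^ p = a ^ (1 + 2 * p) := by
  rw [Real.rpow_add_of_nonneg ha zero_le_one (by positivity), Real.rpow_one,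
    Real.rpow_mul ha, Real.rpow_two]

lemma rpow_lip_unit {q a b : ℝ} (hq : 1 ≤ q) (ha : a ∈ Icc (0:ℝ) 1) (hb : b ∈ Icc (0:ℝ) 1) :
    |a ^ q - b ^ q| ≤ q * |a - b| := by
  have := Convex.norm_image_sub_le_of_norm_hasDerivWithin_le (f := fun x : ℝ => x ^ q)
    (f' := fun x => q * x ^ (q - 1)) (s := Icc (0:ℝ) 1) (C := q) (x := b) (y := a)
    (fun x _ => (Real.hasDerivAt_rpow_const (Or.inr hq)).hasDerivWithinAt)
    (fun x hx => by
      have h1 : x ^ (q - 1) ≤ 1 := Real.rpow_le_one hx.1 hx.2 (by linarith)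
      have h0 : 0 ≤ x ^ (q - 1) := Real.rpow_nonneg hx.1 _
      rw [Real.norm_eq_abs, abs_of_nonneg (by positivity)]
      nlinarith) (convex_Icc _ _) hb ha
  simpa [Real.norm_eq_abs] using this

/-- The odd function `c ↦ c (c²)ᵖ = sign c · |c|^{1+2p}` is Lipschitz on `[-1,1]`. The factor `c`
is essential: `(c²)ᵖ` alone is only Hölder at `0` for small `p`. -/
lemma mul_sq_rpow_lip {p a b : ℝ} (hp : 0 ≤ p) (ha : |a| ≤ 1) (hb : |b| ≤ 1) :
    |a * (a ^ 2) ^ p - b * (b ^ 2) ^ p| ≤ (1 + 2 * p) * |a - b| := by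
  have hq : 1 ≤ 1 + 2 * p := by linarith
  rw [abs_le] at ha hb
  -- when the signs differ, compare both points with `0`
  have opp : ∀ s t : ℝ, s ∈ Icc (0:ℝ) 1 → t ∈ Icc (0:ℝ) 1 →
      |s ^ (1 + 2 * p) + t ^ (1 + 2 * p)| ≤ (1 + 2 * p) * (s + t) := by
    intro s t hs ht
    have h1 := rpow_lip_unit hq hs (show (0:ℝ) ∈ Icc (0:ℝ) 1 by simp)
    have h2 := rpow_lip_unit hq ht (show (0:ℝ) ∈ Icc (0:ℝ) 1 by simp)
    rw [Real.zero_rpow (by linarith), sub_zero, sub_zero] at h1 h2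
    rw [abs_of_nonneg hs.1] at h1
    rw [abs_of_nonneg ht.1] at h2
    linarith [abs_add_le (s ^ (1 + 2 * p)) (t ^ (1 + 2 * p))]
  have neg : ∀ t : ℝ, t ≤ 0 → t * (t ^ 2) ^ p = - (-t) ^ (1 + 2 * p) := by
    intro t ht
    rw [← mul_sq_rpow_eq hp (by linarith : 0 ≤ -t)]
    simp
  rcases le_total 0 a with h | h <;> rcases le_total 0 b with h' | h'
  · rw [mul_sq_rpow_eq hp h, mul_sq_rpow_eq hp h']
    exact rpow_lip_unit hq ⟨h, ha.2⟩ ⟨h', hb.2⟩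
  · rw [mul_sq_rpow_eq hp h, neg b h', sub_neg_eq_add, abs_of_nonneg (by linarith : 0 ≤ a - b)]
    simpa [sub_eq_add_neg] using opp a (-b) ⟨h, ha.2⟩ ⟨by linarith, by linarith⟩
  · rw [mul_sq_rpow_eq hp h', neg a h, abs_sub_comm, sub_neg_eq_add, abs_sub_comm a,
      abs_of_nonneg (by linarith : 0 ≤ b - a)]
    simpa [sub_eq_add_neg] using opp b (-a) ⟨h', hb.2⟩ ⟨by linarith, by linarith⟩
  · rw [neg a h, neg b h', abs_sub_comm]
    have := rpow_lip_unit hq (a := -a) (b := -b) ⟨by linarith, by linarith⟩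
      ⟨by linarith, by linarith⟩
    rw [abs_sub_comm a]
    simpa [sub_eq_add_neg, add_comm] using this

/-- The right-hand side of the equation for `u_Y`, with `p = 1/(2λ) - 1`. -/
noncomputable def gfun (p v ξ : ℝ) : ℝ :=
  (1/2) * ξ * sin v * (cos (v / 2) ^ 2) ^ p

lemma gfun_eq (p v ξ : ℝ) :
    gfun p v ξ = ξ * (sin (v / 2) * (cos (v / 2) * (cos (v / 2) ^ 2) ^ p)) := by
  have : sin v = 2 * sin (v / 2) * cos (v / 2) := by
    rw [← Real.sin_two_mul]; ring_nf
  rw [gfun, this]; ring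

lemma abs_cos_factor_le {p : ℝ} (hp : 0 ≤ p) (v : ℝ) :
    |cos (v / 2) * (cos (v / 2) ^ 2) ^ p| ≤ 1 := by
  have h : (cos (v / 2) ^ 2) ^ p ≤ 1 := Real.rpow_le_one (sq_nonneg _) (cos_sq_le_one _) hp
  have h0 : 0 ≤ (cos (v / 2) ^ 2) ^ p := Real.rpow_nonneg (sq_nonneg _) _
  rw [abs_mul, abs_of_nonneg h0]
  exact mul_le_one₀ (abs_cos_le_one _) h0 h

lemma abs_gfun_le {p : ℝ} (hp : 0 ≤ p) (v ξ : ℝ) : |gfun p v ξ| ≤ |ξ| := by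
  rw [gfun_eq, abs_mul, abs_mul]
  exact mul_le_of_le_one_right (abs_nonneg _)
    (mul_le_one₀ (abs_sin_le_one _) (abs_nonneg _) (abs_cos_factor_le hp v))

lemma continuous_gfun {p : ℝ} (hp : 0 ≤ p) : Continuous fun x : ℝ × ℝ => gfun p x.1 x.2 := by
  unfold gfun
  refine Continuous.mul (by fun_prop) ?_
  exact Continuous.rpow_const (by fun_prop) (fun _ => Or.inr hp)

lemma gfun_zero (p ξ : ℝ) : gfun p 0 ξ = 0 := by simp [gfun]

lemma abs_sin_sub_le' (x y : ℝ) : |sin x - sin y| ≤ |x - y| := by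
  simpa [Real.dist_eq] using Real.lipschitzWith_sin.dist_le_mul x y

lemma abs_cos_sub_le' (x y : ℝ) : |cos x - cos y| ≤ |x - y| := by
  simpa [Real.dist_eq] using Real.lipschitzWith_cos.dist_le_mul x y

lemma gfun_lip {p C : ℝ} (hp : 0 ≤ p) {v₁ v₂ ξ₁ ξ₂ : ℝ} (hξ : |ξ₂| ≤ C) :
    |gfun p v₁ ξ₁ - gfun p v₂ ξ₂| ≤ (1 + C * (1 + p)) * (|v₁ - v₂| + |ξ₁ - ξ₂|) := by
  rw [gfun_eq, gfun_eq]
  set s₁ := sin (v₁ / 2)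
  set s₂ := sin (v₂ / 2)
  have hc := mul_sq_rpow_lip hp (abs_cos_le_one (v₁ / 2)) (abs_cos_le_one (v₂ / 2))
  have h1 := abs_cos_factor_le hp v₁
  set c₁ := cos (v₁ / 2) * (cos (v₁ / 2) ^ 2) ^ p
  set c₂ := cos (v₂ / 2) * (cos (v₂ / 2) ^ 2) ^ p
  have hv : |v₁ / 2 - v₂ / 2| = |v₁ - v₂| / 2 := by
    rw [← sub_div, abs_div]; norm_num
  have hs : |s₁ - s₂| ≤ |v₁ - v₂| / 2 := hv ▸ abs_sin_sub_le' _ _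
  have hc' : |c₁ - c₂| ≤ (1 + 2 * p) * (|v₁ - v₂| / 2) :=
    hc.trans (mul_le_mul_of_nonneg_left (hv ▸ abs_cos_sub_le' _ _) (by linarith))
  have hs1 : |s₁| ≤ 1 := abs_sin_le_one _
  have hs2 : |s₂| ≤ 1 := abs_sin_le_one _
  have hC : 0 ≤ C := (abs_nonneg _).trans hξ
  have key : ξ₁ * (s₁ * c₁) - ξ₂ * (s₂ * c₂) =
      (ξ₁ - ξ₂) * (s₁ * c₁) + ξ₂ * ((s₁ - s₂) * c₁ + s₂ * (c₁ - c₂)) := by ring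
  have a1 : |(ξ₁ - ξ₂) * (s₁ * c₁)| ≤ |ξ₁ - ξ₂| := by
    rw [abs_mul, abs_mul]
    exact mul_le_of_le_one_right (abs_nonneg _) (mul_le_one₀ hs1 (abs_nonneg _) h1)
  have a2 : |(s₁ - s₂) * c₁| ≤ |v₁ - v₂| / 2 := by
    rw [abs_mul]
    exact (mul_le_of_le_one_right (abs_nonneg _) h1).trans hs
  have a3 : |s₂ * (c₁ - c₂)| ≤ (1 + 2 * p) * (|v₁ - v₂| / 2) := by
    rw [abs_mul]
    exact (mul_le_of_le_one_left (abs_nonneg _) hs2).trans hc'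
  have a4 : |ξ₂ * ((s₁ - s₂) * c₁ + s₂ * (c₁ - c₂))| ≤ C * ((1 + p) * |v₁ - v₂|) := by
    rw [abs_mul]
    refine mul_le_mul hξ ?_ (abs_nonneg _) hC
    linarith [abs_add_le ((s₁ - s₂) * c₁) (s₂ * (c₁ - c₂))]
  rw [key]
  have a5 := abs_add_le ((ξ₁ - ξ₂) * (s₁ * c₁)) (ξ₂ * ((s₁ - s₂) * c₁ + s₂ * (c₁ - c₂)))
  have : 0 ≤ C * (1 + p) * |ξ₁ - ξ₂| := by positivity
  nlinarith [abs_nonneg (v₁ - v₂)]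

/-! ### Grönwall inequalities -/

/-- A contraction form of Grönwall's inequality for a family of functions: weighting by `e^{κT}`
avoids any regularity in `T` of the supremum over the family. -/
lemma gronwall_family {ι : Type*} (x : ι → ℝ → ℝ) {τ κ ε B : ℝ} (hκ : 0 ≤ κ) (hε : 0 ≤ ε)
    (hB : ∀ i, ∀ T ∈ Icc 0 τ, x i T ≤ B)
    (h : ∀ N, 0 ≤ N → (∀ i, ∀ T ∈ Icc 0 τ, x i T ≤ N * exp (κ * T)) →
      ∀ i, ∀ T ∈ Icc 0 τ, x i T ≤ ε + N / 2 * exp (κ * T)) :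
    ∀ i, ∀ T ∈ Icc 0 τ, x i T ≤ 2 * ε * exp (κ * T) := by
  have hexp : ∀ T ∈ Icc 0 τ, 1 ≤ exp (κ * T) := fun T hT =>
    Real.one_le_exp (mul_nonneg hκ hT.1)
  have step : ∀ n : ℕ, ∀ i, ∀ T ∈ Icc 0 τ, x i T ≤ (2 * ε + |B| / 2 ^ n) * exp (κ * T) := by
    intro n
    induction n with
    | zero =>
      intro i T hT
      have := hB i T hT
      have := hexp T hT
      simp only [pow_zero, div_one]
      nlinarith [le_abs_self B, abs_nonneg B]
    | succ n ih =>
      intro i T hT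
      have h1 := h _ (by positivity) ih i T hT
      have := hexp T hT
      have e : |B| / 2 ^ (n + 1) = |B| / 2 ^ n / 2 := by rw [pow_succ]; field_simp
      rw [e]
      nlinarith
  intro i T hT
  have lim : Tendsto (fun n : ℕ => (2 * ε + |B| / 2 ^ n) * exp (κ * T)) atTop
      (nhds ((2 * ε + 0) * exp (κ * T))) := by
    refine Tendsto.mul_const _ (Tendsto.const_add _ ?_)
    have := (tendsto_pow_atTop_nhds_zero_of_lt_one (r := (1/2:ℝ)) (by norm_num)
      (by norm_num)).const_mul |B|
    simpa [div_eq_mul_inv] using this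
  rw [add_zero] at lim
  exact ge_of_tendsto' lim (fun n => step n i T hT)

lemma integral_exp_le {κ T : ℝ} (hκ : 0 < κ) :
    ∫ s in (0:ℝ)..T, exp (κ * s) ≤ exp (κ * T) / κ := by
  rw [intervalIntegral.integral_comp_mul_left (fun s => exp s) hκ.ne', integral_exp, smul_eq_mul,
    mul_zero, exp_zero, inv_mul_eq_div]
  gcongr
  linarith

lemma gronwall_integral {x : ℝ → ℝ} (hx : Continuous x) {τ K ε : ℝ} (hK : 0 < K) (hε : 0 ≤ ε)
    (h : ∀ T ∈ Icc 0 τ, x T ≤ ε + K * ∫ s in (0:ℝ)..T, x s) :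
    ∀ T ∈ Icc 0 τ, x T ≤ 2 * ε * exp (2 * K * T) := by
  obtain ⟨B, hB⟩ := (isCompact_Icc (a := (0:ℝ)) (b := τ)).bddAbove_image hx.continuousOn
  refine gronwall_family (fun _ : Unit => x) (B := B) (by positivity) hε
    (fun _ T hT => hB ⟨T, hT, rfl⟩) ?_ ()
  intro N hN hle _ T hT
  refine (h T hT).trans ?_
  have h1 : ∫ s in (0:ℝ)..T, x s ≤ ∫ s in (0:ℝ)..T, N * exp (2 * K * s) := by
    refine intervalIntegral.integral_mono_on hT.1 (hx.intervalIntegrable _ _)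
      (Continuous.intervalIntegrable (by fun_prop) _ _) ?_
    intro s hs
    exact hle () s ⟨hs.1, hs.2.trans hT.2⟩
  rw [intervalIntegral.integral_const_mul] at h1
  have h2 := integral_exp_le (T := T) (by positivity : 0 < 2 * K)
  have h3 : K * (N * (exp (2 * K * T) / (2 * K))) = N / 2 * exp (2 * K * T) := by
    field_simp
  have h4 := mul_le_mul_of_nonneg_left (h1.trans (mul_le_mul_of_nonneg_left h2 hN)) hK.le
  linarith

/-! ### The extended system and measurability of `u` in time -/

/-- The properties of the coefficient `F = f''` that are used: bounded by `M`, Lipschitz with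
constant `L`. -/
structure CoeffBound (F : ℝ → ℝ) (L M : ℝ) : Prop where
  L_nonneg : 0 ≤ L
  bound : ∀ x, |F x| ≤ M
  lip : ∀ x y, |F x - F y| ≤ L * |x - y|

lemma CoeffBound.M_nonneg {F : ℝ → ℝ} {L M : ℝ} (h : CoeffBound F L M) : 0 ≤ M :=
  (abs_nonneg _).trans (h.bound 0)

lemma CoeffBound.continuous {F : ℝ → ℝ} {L M : ℝ} (h : CoeffBound F L M) : Continuous F := by
  refine LipschitzWith.continuous (K := ⟨L, h.L_nonneg⟩) (LipschitzWith.of_dist_le_mul ?_)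
  intro x y
  exact h.lip x y

/-- A solution of the semi-linear system extended from `Ω` to the half plane `T ≥ 0` by the
constant state `(u,v,ξ) = (0,0,1)`, so that the boundary ray disappears. The integrals are only
junk-valued Bochner integrals here: their integrability is proved later, not assumed. -/
structure ExtSol (lam a : ℝ) (F V : ℝ → ℝ) (u v ξ : ℝ → ℝ → ℝ) : Prop where
  cont_V : Continuous V
  bound_V : ∀ Y, |V Y| ≤ 4
  cont_u : ∀ T, Continuous fun Y => u Y T
  cont_v : ∀ Y, Continuous (v Y)
  cont_xi : ∀ Y, Continuous (ξ Y)
  eq_u : ∀ T, 0 ≤ T → ∀ R, a * T ≤ R → ∀ Y,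
    u Y T = ∫ z in (-R)..Y, gfun (1/(2*lam) - 1) (v z T) (ξ z T)
  eq_v : ∀ T, 0 ≤ T → ∀ Y,
    v Y T = V Y + ∫ s in (0:ℝ)..T, -2 * lam * F (u Y s) * sin (v Y s / 2) ^ 2
  eq_xi : ∀ T, 0 ≤ T → ∀ Y,
    ξ Y T = 1 + ∫ s in (0:ℝ)..T, (1/2) * F (u Y s) * ξ Y s * sin (v Y s)

/-- The a priori bound for `|ξ|` on `0 ≤ T ≤ τ`. -/
noncomputable def xiBd (M τ : ℝ) : ℝ := 2 * exp ((1 + M) * τ)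

lemma xiBd_pos (M τ : ℝ) : 0 < xiBd M τ := by unfold xiBd; positivity

section ext
variable {lam a : ℝ} {F V : ℝ → ℝ} {u v ξ : ℝ → ℝ → ℝ} {L M : ℝ}

/-- No measurability of the integrand is needed: a junk integral is `0`. -/
lemma ExtSol.abs_xi_le (hS : ExtSol lam a F V u v ξ) (hF : CoeffBound F L M) {τ T : ℝ}
    (hT : T ∈ Icc 0 τ) (Y : ℝ) : |ξ Y T| ≤ xiBd M τ := by
  have hM := hF.M_nonneg
  have hc : Continuous fun s => |ξ Y s| := (hS.cont_xi Y).abs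
  have := gronwall_integral (x := fun s => |ξ Y s|) hc (τ := τ) (K := (1 + M) / 2) (ε := 1)
    (by positivity) zero_le_one ?_ T hT
  · refine this.trans ?_
    unfold xiBd
    rw [mul_one, show 2 * ((1 + M) / 2) = 1 + M by ring]
    gcongr
    exact hT.2
  · intro t ht
    rw [hS.eq_xi t ht.1 Y]
    refine (abs_add_le _ _).trans ?_
    rw [abs_one, ← intervalIntegral.integral_const_mul]
    gcongr
    rw [← Real.norm_eq_abs]
    refine intervalIntegral.norm_integral_le_of_norm_le ht.1 (Eventually.of_forall ?_)
      ((hc.const_mul _).intervalIntegrable _ _)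
    intro s _
    rw [Real.norm_eq_abs, abs_mul, abs_mul, abs_mul, abs_of_pos (by norm_num : (0:ℝ) < 1/2)]
    have h1 := hF.bound (u Y s)
    have h2 := abs_sin_le_one (v Y s)
    have h3 := abs_nonneg (ξ Y s)
    calc 1/2 * |F (u Y s)| * |ξ Y s| * |sin (v Y s)|
        ≤ 1/2 * |F (u Y s)| * |ξ Y s| * 1 := by gcongr
      _ ≤ 1/2 * M * |ξ Y s| * 1 := by gcongr
      _ ≤ (1 + M) / 2 * |ξ Y s| := by nlinarith

lemma ExtSol.abs_v_le (hS : ExtSol lam a F V u v ξ) (hF : CoeffBound F L M)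
    (hlam : 0 < lam ∧ lam ≤ 1/2) {τ T : ℝ}
    (hT : T ∈ Icc 0 τ) (Y : ℝ) : |v Y T| ≤ 4 + M * τ := by
  have hM := hF.M_nonneg
  rw [hS.eq_v T hT.1 Y]
  refine (abs_add_le _ _).trans (add_le_add (hS.bound_V Y) ?_)
  have := intervalIntegral.norm_integral_le_of_norm_le_const (a := 0) (b := T) (C := M)
    (f := fun s => -2 * lam * F (u Y s) * sin (v Y s / 2) ^ 2) ?_
  · refine this.trans ?_
    rw [sub_zero, abs_of_nonneg hT.1]
    exact mul_le_mul_of_nonneg_left hT.2 hM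
  · intro s _
    rw [Real.norm_eq_abs, abs_mul, abs_mul, abs_mul, abs_of_pos hlam.1, abs_neg, abs_two,
      abs_of_nonneg (sq_nonneg (sin _))]
    have h1 := hF.bound (u Y s)
    calc 2 * lam * |F (u Y s)| * sin (v Y s / 2) ^ 2
        ≤ 2 * lam * |F (u Y s)| * 1 := by 
          have := hlam.1
          gcongr; exact sin_sq_le_one _
      _ ≤ 1 * |F (u Y s)| * 1 := by gcongr; linarith
      _ ≤ M := by linarith

/-- For fixed `Y` the function `T ↦ u(Y,T)` is measurable on `[0,τ]`. The times at which the
`z`-integrand of `u` is measurable form a closed set `G`, since a pointwise limit of measurable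
functions is measurable; `u(Y,·)` is continuous on `G` by dominated convergence, and vanishes off
`G` because the integral is then junk. -/
lemma ExtSol.meas_u (hS : ExtSol lam a F V u v ξ) (hF : CoeffBound F L M)
    (hlam : 0 < lam ∧ lam ≤ 1/2) (ha : 0 ≤ a) (τ Y : ℝ) :
    AEStronglyMeasurable (u Y) (volume.restrict (Icc 0 τ)) := by
  have hp : 0 ≤ 1/(2*lam) - 1 := by
    rw [sub_nonneg, le_div_iff₀ (by linarith [hlam.1])]; linarith [hlam.2]
  set p := 1/(2*lam) - 1 with hpdef
  set R := a * τ
  have hcont : ∀ z, Continuous fun T => gfun p (v z T) (ξ z T) := fun z =>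
    (continuous_gfun hp).comp ((hS.cont_v z).prodMk (hS.cont_xi z))
  have hu : ∀ T ∈ Icc 0 τ, u Y T = ∫ z in (-R)..Y, gfun p (v z T) (ξ z T) := fun T hT =>
    hS.eq_u T hT.1 R (mul_le_mul_of_nonneg_left hT.2 ha) Y
  set G : Set ℝ := {T | T ∈ Icc 0 τ ∧ AEStronglyMeasurable (fun z => gfun p (v z T) (ξ z T))
    (volume.restrict (uIoc (-R) Y))} with hG
  have hGclosed : IsClosed G := by
    refine IsSeqClosed.isClosed ?_
    intro t T ht htT
    refine ⟨isClosed_Icc.mem_of_tendsto htT (Eventually.of_forall fun n => (ht n).1), ?_⟩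
    exact aestronglyMeasurable_of_tendsto_ae atTop (fun n => (ht n).2)
      (Eventually.of_forall fun z => ((hcont z).tendsto T).comp htT)
  have hGcont : ContinuousOn (u Y) G := by
    intro T hT
    have key : Tendsto (fun T => ∫ z in (-R)..Y, gfun p (v z T) (ξ z T)) (nhdsWithin T G)
        (nhds (∫ z in (-R)..Y, gfun p (v z T) (ξ z T))) := by
      refine intervalIntegral.tendsto_integral_filter_of_dominated_convergence
        (fun _ => xiBd M τ) ?_ ?_ intervalIntegrable_const ?_
      · exact eventually_mem_nhdsWithin.mono fun t ht => ht.2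
      · refine eventually_mem_nhdsWithin.mono fun t ht => Eventually.of_forall fun z _ => ?_
        exact (abs_gfun_le hp _ _).trans (hS.abs_xi_le hF ht.1 z)
      · exact Eventually.of_forall fun z _ => ((hcont z).tendsto T).mono_left nhdsWithin_le_nhds
    rw [ContinuousWithinAt, hu T hT.1]
    refine key.congr' (eventually_mem_nhdsWithin.mono fun t ht => ?_)
    exact (hu t ht.1).symm
  have h1 : AEStronglyMeasurable (G.indicator (u Y)) (volume.restrict (Icc 0 τ)) := by
    rw [aestronglyMeasurable_indicator_iff hGclosed.measurableSet]
    exact (hGcont.aestronglyMeasurable hGclosed.measurableSet).mono_measure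
      (Measure.restrict_mono_measure Measure.restrict_le_self _)
  refine h1.congr ?_
  filter_upwards [ae_restrict_mem measurableSet_Icc] with T hT
  by_cases hTG : T ∈ G
  · rw [indicator_of_mem hTG]
  · rw [indicator_of_notMem hTG, hu T hT, intervalIntegral.integral_undef]
    intro hint
    exact hTG ⟨hT, hint.def'.aestronglyMeasurable⟩

lemma ExtSol.meas_Fu (hS : ExtSol lam a F V u v ξ) (hF : CoeffBound F L M)
    (hlam : 0 < lam ∧ lam ≤ 1/2) (ha : 0 ≤ a) (T Y : ℝ) (hT : 0 ≤ T) :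
    AEStronglyMeasurable (fun s => F (u Y s)) (volume.restrict (uIoc 0 T)) := by
  refine hF.continuous.comp_aestronglyMeasurable ((hS.meas_u hF hlam ha T Y).mono_measure ?_)
  rw [uIoc_of_le hT]
  exact Measure.restrict_mono_set _ Ioc_subset_Icc_self

lemma ExtSol.integrable_v (hS : ExtSol lam a F V u v ξ) (hF : CoeffBound F L M)
    (hlam : 0 < lam ∧ lam ≤ 1/2) (ha : 0 ≤ a) (T Y : ℝ) (hT : 0 ≤ T) :
    IntervalIntegrable (fun s => -2 * lam * F (u Y s) * sin (v Y s / 2) ^ 2) volume 0 T := by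
  have hc : Continuous fun s => sin (v Y s / 2) ^ 2 :=
    (continuous_sin.comp ((hS.cont_v Y).div_const 2)).pow 2
  have : IntervalIntegrable (fun s => F (u Y s)) volume 0 T := by
    refine (intervalIntegrable_const (c := M)).mono_fun (hS.meas_Fu hF hlam ha T Y hT) ?_
    refine Eventually.of_forall fun s => ?_
    exact (hF.bound _).trans (le_abs_self M)
  exact (this.const_mul (-2 * lam)).mul_continuousOn hc.continuousOn

lemma ExtSol.integrable_xi (hS : ExtSol lam a F V u v ξ) (hF : CoeffBound F L M)
    (hlam : 0 < lam ∧ lam ≤ 1/2) (ha : 0 ≤ a) (T Y : ℝ) (hT : 0 ≤ T) :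
    IntervalIntegrable (fun s => (1/2) * F (u Y s) * ξ Y s * sin (v Y s)) volume 0 T := by
  have hc : Continuous fun s => ξ Y s * sin (v Y s) :=
    (hS.cont_xi Y).mul (continuous_sin.comp (hS.cont_v Y))
  have : IntervalIntegrable (fun s => F (u Y s)) volume 0 T := by
    refine (intervalIntegrable_const (c := M)).mono_fun (hS.meas_Fu hF hlam ha T Y hT) ?_
    refine Eventually.of_forall fun s => ?_
    exact (hF.bound _).trans (le_abs_self M)
  refine ((this.const_mul (1/2)).mul_continuousOn hc.continuousOn).congr ?_
  intro s _
  simp only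
  ring

end ext

/-! ### Comparison of the evolution in `T` -/

lemma rhs_v_lip {lam M F₁ F₂ v₁ v₂ : ℝ} (hlam : 0 < lam ∧ lam ≤ 1/2) (hF : |F₂| ≤ M) :
    |-2 * lam * F₁ * sin (v₁ / 2) ^ 2 - -2 * lam * F₂ * sin (v₂ / 2) ^ 2| ≤
      |F₁ - F₂| + M * |v₁ - v₂| := by
  have hs : ∀ x : ℝ, sin (x / 2) ^ 2 = 1 / 2 - cos x / 2 := by
    intro x
    rw [Real.sin_sq_eq_half_sub]; ring_nf
  have h1 : |sin (v₁ / 2) ^ 2 - sin (v₂ / 2) ^ 2| ≤ |v₁ - v₂| := by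
    rw [hs, hs, show 1 / 2 - cos v₁ / 2 - (1 / 2 - cos v₂ / 2) = -((cos v₁ - cos v₂) / 2) by ring,
      abs_neg, abs_div, abs_two]
    linarith [abs_cos_sub_le' v₁ v₂, abs_nonneg (cos v₁ - cos v₂)]
  have h2 : |sin (v₁ / 2) ^ 2| ≤ 1 := by
    rw [abs_of_nonneg (sq_nonneg _)]; exact sin_sq_le_one _
  set s₁ := sin (v₁ / 2) ^ 2
  set s₂ := sin (v₂ / 2) ^ 2
  have hM := (abs_nonneg _).trans hF
  rw [show -2 * lam * F₁ * s₁ - -2 * lam * F₂ * s₂ =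
    -(2 * lam) * ((F₁ - F₂) * s₁ + F₂ * (s₁ - s₂)) by ring, abs_mul, abs_neg,
    abs_of_pos (by linarith [hlam.1] : 0 < 2 * lam)]
  have h3 : |(F₁ - F₂) * s₁| ≤ |F₁ - F₂| := by
    rw [abs_mul]; exact mul_le_of_le_one_right (abs_nonneg _) h2
  have h4 : |F₂ * (s₁ - s₂)| ≤ M * |v₁ - v₂| := by
    rw [abs_mul]; exact mul_le_mul hF h1 (abs_nonneg _) hM
  have h5 := abs_add_le ((F₁ - F₂) * s₁) (F₂ * (s₁ - s₂))
  refine (mul_le_of_le_one_left (abs_nonneg _) (by linarith [hlam.2])).trans ?_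
  linarith

lemma rhs_xi_lip {M C F₁ F₂ v₁ v₂ ξ₁ ξ₂ : ℝ} (hF : |F₂| ≤ M) (h₁ : |ξ₁| ≤ C) (h₂ : |ξ₂| ≤ C) :
    |(1/2) * F₁ * ξ₁ * sin v₁ - (1/2) * F₂ * ξ₂ * sin v₂| ≤
      C * |F₁ - F₂| + M * (|ξ₁ - ξ₂| + C * |v₁ - v₂|) := by
  have hM := (abs_nonneg _).trans hF
  have hC := (abs_nonneg _).trans h₁
  have hs := abs_sin_sub_le' v₁ v₂
  have hs1 := abs_sin_le_one v₁
  set s₁ := sin v₁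
  set s₂ := sin v₂
  rw [show (1/2) * F₁ * ξ₁ * s₁ - (1/2) * F₂ * ξ₂ * s₂ =
    (1/2) * ((F₁ - F₂) * (ξ₁ * s₁) + F₂ * ((ξ₁ - ξ₂) * s₁ + ξ₂ * (s₁ - s₂))) by ring, abs_mul,
    abs_of_pos (by norm_num : (0:ℝ) < 1/2)]
  have a1 : |(F₁ - F₂) * (ξ₁ * s₁)| ≤ C * |F₁ - F₂| := by
    rw [abs_mul, mul_comm, abs_mul]
    exact mul_le_mul_of_nonneg_right
      ((mul_le_of_le_one_right (abs_nonneg _) hs1).trans h₁) (abs_nonneg _)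
  have a2 : |(ξ₁ - ξ₂) * s₁| ≤ |ξ₁ - ξ₂| := by
    rw [abs_mul]; exact mul_le_of_le_one_right (abs_nonneg _) hs1
  have a3 : |ξ₂ * (s₁ - s₂)| ≤ C * |v₁ - v₂| := by
    rw [abs_mul]; exact mul_le_mul h₂ hs (abs_nonneg _) hC
  have a4 : |F₂ * ((ξ₁ - ξ₂) * s₁ + ξ₂ * (s₁ - s₂))| ≤ M * (|ξ₁ - ξ₂| + C * |v₁ - v₂|) := by
    rw [abs_mul]
    refine mul_le_mul hF ?_ (abs_nonneg _) hM
    linarith [abs_add_le ((ξ₁ - ξ₂) * s₁) (ξ₂ * (s₁ - s₂))]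
  refine (mul_le_of_le_one_left (abs_nonneg _) (by norm_num)).trans ?_
  linarith [abs_add_le ((F₁ - F₂) * (ξ₁ * s₁)) (F₂ * ((ξ₁ - ξ₂) * s₁ + ξ₂ * (s₁ - s₂)))]

/-- The Lipschitz constant of the `T`-evolution of `(v,ξ)` on `[0,τ]`. -/
noncomputable def odeK (M τ : ℝ) : ℝ := 1 + M + xiBd M τ + M * xiBd M τ

lemma odeK_pos {M : ℝ} (hM : 0 ≤ M) (τ : ℝ) : 0 < odeK M τ := by
  have := xiBd_pos M τ
  unfold odeK; positivity

/-- Comparison in `T` of the pairs `(v,ξ)` of two solutions along two vertical lines `Y₁`, `Y₂`. -/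
lemma ode_compare {lam a : ℝ} {F V₁ V₂ : ℝ → ℝ} {u₁ v₁ ξ₁ u₂ v₂ ξ₂ : ℝ → ℝ → ℝ} {L M : ℝ}
    (h₁ : ExtSol lam a F V₁ u₁ v₁ ξ₁) (h₂ : ExtSol lam a F V₂ u₂ v₂ ξ₂) (hF : CoeffBound F L M)
    (hlam : 0 < lam ∧ lam ≤ 1/2) (ha : 0 ≤ a) (Y₁ Y₂ : ℝ) {τ T : ℝ} (hT : T ∈ Icc 0 τ)
    {h : ℝ → ℝ} (hh : IntervalIntegrable h volume 0 T)
    (hle : ∀ s ∈ Icc 0 T, |F (u₁ Y₁ s) - F (u₂ Y₂ s)| +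
      (|v₁ Y₁ s - v₂ Y₂ s| + |ξ₁ Y₁ s - ξ₂ Y₂ s|) ≤ h s) :
    |v₁ Y₁ T - v₂ Y₂ T| + |ξ₁ Y₁ T - ξ₂ Y₂ T| ≤
      |V₁ Y₁ - V₂ Y₂| + odeK M τ * ∫ s in (0:ℝ)..T, h s := by
  have hM := hF.M_nonneg
  set C := xiBd M τ with hCdef
  have hC : 0 < C := xiBd_pos M τ
  have hv : |v₁ Y₁ T - v₂ Y₂ T| ≤ |V₁ Y₁ - V₂ Y₂| + ∫ s in (0:ℝ)..T, (1 + M) * h s := by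
    rw [h₁.eq_v T hT.1, h₂.eq_v T hT.1, add_sub_add_comm, ← intervalIntegral.integral_sub
      (h₁.integrable_v hF hlam ha T Y₁ hT.1) (h₂.integrable_v hF hlam ha T Y₂ hT.1)]
    refine (abs_add_le _ _).trans (add_le_add le_rfl ?_)
    rw [← Real.norm_eq_abs]
    refine intervalIntegral.norm_integral_le_of_norm_le hT.1 (Eventually.of_forall ?_)
      (hh.const_mul _)
    intro s hs
    have hs' := hle s ⟨hs.1.le, hs.2⟩
    refine (rhs_v_lip hlam (hF.bound _)).trans ?_
    have b1 := abs_nonneg (F (u₁ Y₁ s) - F (u₂ Y₂ s))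
    have b2 := abs_nonneg (v₁ Y₁ s - v₂ Y₂ s)
    have b3 := abs_nonneg (ξ₁ Y₁ s - ξ₂ Y₂ s)
    have := mul_le_mul_of_nonneg_left hs' hM
    nlinarith [mul_nonneg hM b1, mul_nonneg hM b3]
  have hx : |ξ₁ Y₁ T - ξ₂ Y₂ T| ≤ ∫ s in (0:ℝ)..T, (C + M * C) * h s := by
    rw [h₁.eq_xi T hT.1, h₂.eq_xi T hT.1, add_sub_add_left_eq_sub,
      ← intervalIntegral.integral_sub
      (h₁.integrable_xi hF hlam ha T Y₁ hT.1) (h₂.integrable_xi hF hlam ha T Y₂ hT.1)]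
    rw [← Real.norm_eq_abs]
    refine intervalIntegral.norm_integral_le_of_norm_le hT.1 (Eventually.of_forall ?_)
      (hh.const_mul _)
    intro s hs
    have hs' := hle s ⟨hs.1.le, hs.2⟩
    have hsτ : s ∈ Icc 0 τ := ⟨hs.1.le, hs.2.trans hT.2⟩
    refine (rhs_xi_lip (hF.bound _) (h₁.abs_xi_le hF hsτ Y₁) (h₂.abs_xi_le hF hsτ Y₂)).trans ?_
    rw [← hCdef]
    have b1 := abs_nonneg (F (u₁ Y₁ s) - F (u₂ Y₂ s))
    have b2 := abs_nonneg (v₁ Y₁ s - v₂ Y₂ s)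
    have b3 := abs_nonneg (ξ₁ Y₁ s - ξ₂ Y₂ s)
    -- `1 ≤ C`
    have hC1 : 1 ≤ C := by
      have : 1 ≤ exp ((1 + M) * τ) :=
        Real.one_le_exp (mul_nonneg (by linarith) (hT.1.trans hT.2))
      rw [hCdef, xiBd]; linarith
    calc C * |F (u₁ Y₁ s) - F (u₂ Y₂ s)| +
          M * (|ξ₁ Y₁ s - ξ₂ Y₂ s| + C * |v₁ Y₁ s - v₂ Y₂ s|)
        ≤ C * |F (u₁ Y₁ s) - F (u₂ Y₂ s)| +
          M * (C * |ξ₁ Y₁ s - ξ₂ Y₂ s| + C * |v₁ Y₁ s - v₂ Y₂ s|) := by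
          gcongr; exact le_mul_of_one_le_left b3 hC1
      _ ≤ (C + M * C) * (|F (u₁ Y₁ s) - F (u₂ Y₂ s)| +
          (|v₁ Y₁ s - v₂ Y₂ s| + |ξ₁ Y₁ s - ξ₂ Y₂ s|)) := by
          have : 0 ≤ C * |v₁ Y₁ s - v₂ Y₂ s| := by positivity
          have : 0 ≤ C * |ξ₁ Y₁ s - ξ₂ Y₂ s| := by positivity
          have : 0 ≤ M * C * |F (u₁ Y₁ s) - F (u₂ Y₂ s)| := by positivity
          nlinarith
      _ ≤ (C + M * C) * h s := by gcongr
  rw [intervalIntegral.integral_const_mul] at hv hx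
  have : odeK M τ = (1 + M) + (C + M * C) := by unfold odeK; ring
  rw [this]
  linarith

/-! ### Continuity in `Y` -/

/-- `v(·,T)` and `ξ(·,T)` are continuous in `Y`, since the solution of the `T`-evolution depends
continuously on `V(Y)` and on the coefficient `F(u(Y,·))`; the latter is continuous in `Y` in
`L¹(0,T)` by dominated convergence. -/
lemma ExtSol.cont_Y {lam a : ℝ} {F V : ℝ → ℝ} {u v ξ : ℝ → ℝ → ℝ} {L M : ℝ}
    (hS : ExtSol lam a F V u v ξ) (hF : CoeffBound F L M)
    (hlam : 0 < lam ∧ lam ≤ 1/2) (ha : 0 ≤ a) {T : ℝ} (hT : 0 ≤ T) :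
    Continuous (fun Y => v Y T) ∧ Continuous (fun Y => ξ Y T) := by
  have hM := hF.M_nonneg
  have hK := odeK_pos hM T
  have hmeas : ∀ Y Y₀, AEStronglyMeasurable (fun s => |F (u Y s) - F (u Y₀ s)|)
      (volume.restrict (uIoc 0 T)) := fun Y Y₀ =>
    ((hS.meas_Fu hF hlam ha T Y hT).sub (hS.meas_Fu hF hlam ha T Y₀ hT)).norm
  have hbd : ∀ Y Y₀ s, ‖|F (u Y s) - F (u Y₀ s)|‖ ≤ 2 * M := fun Y Y₀ s => by
    rw [Real.norm_eq_abs, abs_abs]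
    linarith [abs_sub (F (u Y s)) (F (u Y₀ s)), hF.bound (u Y s), hF.bound (u Y₀ s)]
  have hint : ∀ Y Y₀, IntervalIntegrable (fun s => |F (u Y s) - F (u Y₀ s)|) volume 0 T :=
    fun Y Y₀ => (intervalIntegrable_const (c := 2 * M)).mono_fun (hmeas Y Y₀)
      (Eventually.of_forall fun s => (hbd Y Y₀ s).trans (le_abs_self _))
  set E : ℝ → ℝ → ℝ := fun Y₀ Y => |V Y - V Y₀| +
    odeK M T * ∫ s in (0:ℝ)..T, |F (u Y s) - F (u Y₀ s)| with hE
  have hEcont : ∀ Y₀, Continuous (E Y₀) := by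
    intro Y₀
    refine ((hS.cont_V.sub continuous_const).abs).add (continuous_const.mul ?_)
    refine intervalIntegral.continuous_of_dominated_interval (bound := fun _ => 2 * M)
      (fun Y => hmeas Y Y₀) (fun Y => Eventually.of_forall fun s _ => hbd Y Y₀ s)
      intervalIntegrable_const (Eventually.of_forall fun s _ => ?_)
    exact ((hF.continuous.comp (hS.cont_u s)).sub continuous_const).abs
  have hE0 : ∀ Y₀, E Y₀ Y₀ = 0 := fun Y₀ => by simp [hE]
  have key : ∀ Y₀ Y, |v Y T - v Y₀ T| + |ξ Y T - ξ Y₀ T| ≤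
      2 * E Y₀ Y * exp (2 * odeK M T * T) := by
    intro Y₀ Y
    have hxc : Continuous fun s => |v Y s - v Y₀ s| + |ξ Y s - ξ Y₀ s| :=
      ((hS.cont_v Y).sub (hS.cont_v Y₀)).abs.add ((hS.cont_xi Y).sub (hS.cont_xi Y₀)).abs
    have hE_nonneg : 0 ≤ E Y₀ Y :=
      add_nonneg (abs_nonneg _) (mul_nonneg hK.le
        (intervalIntegral.integral_nonneg hT fun s _ => abs_nonneg _))
    refine gronwall_integral (x := fun s => |v Y s - v Y₀ s| + |ξ Y s - ξ Y₀ s|) hxc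
      (τ := T) hK hE_nonneg ?_ T ⟨hT, le_rfl⟩
    intro t ht
    have hi1 : IntervalIntegrable (fun s => |F (u Y s) - F (u Y₀ s)|) volume 0 t :=
      (hint Y Y₀).mono_set (by
        rw [uIcc_of_le ht.1, uIcc_of_le hT]; exact Icc_subset_Icc_right ht.2)
    have hi2 := hxc.intervalIntegrable (μ := volume) 0 t
    have := ode_compare hS hS hF hlam ha Y Y₀ ht (hi1.add hi2) (fun s _ => le_rfl)
    refine this.trans ?_
    rw [intervalIntegral.integral_add hi1 hi2, mul_add, ← add_assoc]
    have hmono : ∫ s in (0:ℝ)..t, |F (u Y s) - F (u Y₀ s)| ≤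
        ∫ s in (0:ℝ)..T, |F (u Y s) - F (u Y₀ s)| :=
      intervalIntegral.integral_mono_interval le_rfl ht.1 ht.2
        (Eventually.of_forall fun s => abs_nonneg _) (hint Y Y₀)
    simp only [hE]
    gcongr
  have lim : ∀ Y₀, Tendsto (fun Y => 2 * E Y₀ Y * exp (2 * odeK M T * T)) (nhds Y₀) (nhds 0) := by
    intro Y₀
    have : Continuous fun Y => 2 * E Y₀ Y * exp (2 * odeK M T * T) :=
      ((hEcont Y₀).const_mul 2).mul_const _
    simpa [hE0] using this.tendsto Y₀
  constructor
  · refine continuous_iff_continuousAt.2 fun Y₀ => ?_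
    rw [ContinuousAt, tendsto_iff_norm_sub_tendsto_zero]
    refine squeeze_zero (fun _ => norm_nonneg _) (fun Y => ?_) (lim Y₀)
    exact (le_add_of_nonneg_right (abs_nonneg _)).trans (key Y₀ Y)
  · refine continuous_iff_continuousAt.2 fun Y₀ => ?_
    rw [ContinuousAt, tendsto_iff_norm_sub_tendsto_zero]
    refine squeeze_zero (fun _ => norm_nonneg _) (fun Y => ?_) (lim Y₀)
    exact (le_add_of_nonneg_left (abs_nonneg _)).trans (key Y₀ Y)

/-! ### Stability of the extended system -/

/-- Quantitative stability: on `[-aτ, r] × [0,τ]` the distance of two solutions is controlled by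
the distance of the initial values of `v`. -/
lemma stability {lam a : ℝ} {F : ℝ → ℝ} {L M : ℝ} (hF : CoeffBound F L M)
    (hlam : 0 < lam ∧ lam ≤ 1/2) (ha : 0 ≤ a) {τ r : ℝ} (hτ : 0 ≤ τ) (hr : 0 ≤ r) :
    ∃ C, 0 ≤ C ∧ ∀ (V₁ V₂ : ℝ → ℝ) (u₁ v₁ ξ₁ u₂ v₂ ξ₂ : ℝ → ℝ → ℝ),
      ExtSol lam a F V₁ u₁ v₁ ξ₁ → ExtSol lam a F V₂ u₂ v₂ ξ₂ → ∀ ε, 0 ≤ ε →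
      (∀ Y ∈ Icc (-(a * τ)) r, |V₁ Y - V₂ Y| ≤ ε) →
      ∀ Y ∈ Icc (-(a * τ)) r, ∀ T ∈ Icc 0 τ,
        |u₁ Y T - u₂ Y T| ≤ C * ε ∧ |v₁ Y T - v₂ Y T| ≤ C * ε ∧ |ξ₁ Y T - ξ₂ Y T| ≤ C * ε := by
  have hM := hF.M_nonneg
  have hL := hF.L_nonneg
  have hp : 0 ≤ 1/(2*lam) - 1 := by
    rw [sub_nonneg, le_div_iff₀ (by linarith [hlam.1])]; linarith [hlam.2]
  set p := 1/(2*lam) - 1 with hpdef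
  set R := a * τ with hR
  have hR0 : 0 ≤ R := mul_nonneg ha hτ
  set K := odeK M τ with hKdef
  have hK : 0 < K := odeK_pos hM τ
  -- `A` is the Lipschitz constant of `(v,ξ) ↦ u` in the uniform norm over `[-R, r]`
  set A := (1 + xiBd M τ * (1 + p)) * (r + R) with hA
  have hA1 : 0 ≤ 1 + xiBd M τ * (1 + p) := by
    have := xiBd_pos M τ
    positivity
  have hA0 : 0 ≤ A := by positivity
  set κ := 2 * (K * (L * A + 1)) with hκdef
  have hκ : 0 < κ := by positivity
  refine ⟨(1 + A) * (2 * exp (κ * τ)), by positivity, ?_⟩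
  intro V₁ V₂ u₁ v₁ ξ₁ u₂ v₂ ξ₂ h₁ h₂ ε hε hV
  have hu : ∀ N, ∀ T ∈ Icc 0 τ,
      (∀ Y ∈ Icc (-R) r, |v₁ Y T - v₂ Y T| + |ξ₁ Y T - ξ₂ Y T| ≤ N) →
      ∀ Y ∈ Icc (-R) r, |u₁ Y T - u₂ Y T| ≤ A * N := by
    intro N T hT hN Y hY
    have hRT : a * T ≤ R := mul_le_mul_of_nonneg_left hT.2 ha
    have hint : ∀ {V : ℝ → ℝ} {u v ξ : ℝ → ℝ → ℝ}, ExtSol lam a F V u v ξ →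
        IntervalIntegrable (fun z => gfun p (v z T) (ξ z T)) volume (-R) Y := by
      intro V u v ξ h
      have hc := h.cont_Y hF hlam ha hT.1
      exact ((continuous_gfun hp).comp (hc.1.prodMk hc.2)).intervalIntegrable _ _
    rw [h₁.eq_u T hT.1 R hRT Y, h₂.eq_u T hT.1 R hRT Y,
      ← intervalIntegral.integral_sub (hint h₁) (hint h₂)]
    have := intervalIntegral.norm_integral_le_of_norm_le_const (a := -R) (b := Y)
      (f := fun z => gfun p (v₁ z T) (ξ₁ z T) - gfun p (v₂ z T) (ξ₂ z T))
      (C := (1 + xiBd M τ * (1 + p)) * N) ?_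
    · refine this.trans ?_
      have hN0 : 0 ≤ N := le_trans (by positivity) (hN Y hY)
      have hYR : |Y - -R| ≤ r + R := by
        rw [abs_of_nonneg (by linarith [hY.1])]; linarith [hY.2]
      calc (1 + xiBd M τ * (1 + p)) * N * |Y - -R|
          ≤ (1 + xiBd M τ * (1 + p)) * N * (r + R) := by gcongr
        _ = A * N := by rw [hA]; ring
    · intro z hz
      rw [uIoc_of_le hY.1] at hz
      refine (gfun_lip hp (h₂.abs_xi_le hF hT z)).trans ?_
      gcongr
      exact hN z ⟨hz.1.le, hz.2.trans hY.2⟩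
  have main := gronwall_family
    (fun (Y : Icc (-R) r) T => |v₁ Y T - v₂ Y T| + |ξ₁ Y T - ξ₂ Y T|) (τ := τ) (κ := κ) (ε := ε)
    (B := 2 * (4 + M * τ) + 2 * xiBd M τ) hκ.le hε ?_ ?_
  · intro Y hY T hT
    have hT2 : exp (κ * T) ≤ exp (κ * τ) := by gcongr; exact hT.2
    have h3 := hu _ T hT (fun Y hY => main ⟨Y, hY⟩ T hT) Y hY
    have h4 := main ⟨Y, hY⟩ T hT
    have h5 : 2 * ε * exp (κ * T) ≤ 2 * ε * exp (κ * τ) := by gcongr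
    have h6 : 0 ≤ 2 * ε * exp (κ * τ) := by positivity
    have h7 : A * (2 * ε * exp (κ * T)) ≤ A * (2 * ε * exp (κ * τ)) := by gcongr
    have h8 : 0 ≤ A * (2 * ε * exp (κ * τ)) := by positivity
    have h9 : (1 + A) * (2 * exp (κ * τ)) * ε =
      2 * ε * exp (κ * τ) + A * (2 * ε * exp (κ * τ)) := by ring
    simp only at h4
    rw [h9]
    have b2 := abs_nonneg (v₁ Y T - v₂ Y T)
    have b3 := abs_nonneg (ξ₁ Y T - ξ₂ Y T)
    refine ⟨by linarith, by linarith, by linarith⟩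
  · intro Y T hT
    have c1 := h₁.abs_v_le hF hlam hT Y
    have c2 := h₂.abs_v_le hF hlam hT Y
    have c3 := h₁.abs_xi_le hF hT Y
    have c4 := h₂.abs_xi_le hF hT Y
    have c5 := abs_sub (v₁ Y T) (v₂ Y T)
    have c6 := abs_sub (ξ₁ Y T) (ξ₂ Y T)
    linarith
  · intro N hN hle Y T hT
    have hc : Continuous fun s => (L * A + 1) * N * exp (κ * s) := by fun_prop
    have := ode_compare h₁ h₂ hF hlam ha Y Y hT (hc.intervalIntegrable 0 T) ?_
    · refine this.trans (add_le_add (hV Y Y.2) ?_)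
      rw [intervalIntegral.integral_const_mul, ← hKdef]
      calc K * ((L * A + 1) * N * ∫ s in (0:ℝ)..T, exp (κ * s))
          ≤ K * ((L * A + 1) * N * (exp (κ * T) / κ)) := by
            gcongr; exact integral_exp_le hκ
        _ = N / 2 * exp (κ * T) := by rw [hκdef]; field_simp
    · intro s hs
      have hs' : s ∈ Icc 0 τ := ⟨hs.1, hs.2.trans hT.2⟩
      have e1 := hu _ s hs' (fun Y hY => hle ⟨Y, hY⟩ s hs') Y Y.2
      have e2 := hle Y s hs'
      have e3 := (hF.lip (u₁ Y s) (u₂ Y s)).trans (mul_le_mul_of_nonneg_left e1 hL)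
      nlinarith

/-! ### Extension beyond the boundary ray -/

lemma continuous_comp_max {g : ℝ → ℝ} {t₀ : ℝ} (h : ∀ r, ContinuousOn g (Icc t₀ r)) :
    Continuous fun t => g (max t t₀) := by
  have h' : ContinuousOn g (Ici t₀) := by
    intro x hx
    refine (h (x + 1) x ⟨hx, by linarith⟩).mono_of_mem_nhdsWithin ?_
    rw [← Ici_inter_Iic]
    exact inter_mem_nhdsWithin _ (Iic_mem_nhds (by linarith))
  exact h'.comp_continuous (by fun_prop) (fun t => mem_Ici.2 (le_max_right _ _))

/-- No integrability is required. -/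
lemma integral_eq_of_zero_left {g : ℝ → ℝ} {b c d : ℝ} (hbc : b ≤ c) (hcd : c ≤ d)
    (h : ∀ z ∈ Ioc b c, g z = 0) : ∫ z in b..d, g z = ∫ z in c..d, g z := by
  rw [intervalIntegral.integral_of_le (hbc.trans hcd), intervalIntegral.integral_of_le hcd]
  refine setIntegral_eq_of_subset_of_forall_sdiff_eq_zero measurableSet_Ioc
    (Ioc_subset_Ioc_left hbc) ?_
  intro z hz
  refine h z ⟨hz.1.1, ?_⟩
  by_contra hlt
  exact hz.2 ⟨not_le.1 hlt, hz.1.2⟩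

lemma integral_eq_zero_of_forall {g : ℝ → ℝ} {b c : ℝ} (h : ∀ z ∈ uIcc b c, g z = 0) :
    ∫ z in b..c, g z = 0 := by
  rw [intervalIntegral.integral_congr (g := fun _ => (0:ℝ)) h, intervalIntegral.integral_zero]

/-- The extension of a function on `Ω` by the constant `c` beyond the boundary ray, and constant
in time for `T < 0`. -/
noncomputable def hat (a c : ℝ) (w : ℝ → ℝ → ℝ) (Y T : ℝ) : ℝ :=
  if -a * max T 0 ≤ Y then w Y (max T 0) else c

section hat
variable {a c : ℝ} {w : ℝ → ℝ → ℝ}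

lemma hat_of_mem {Y T : ℝ} (hT : 0 ≤ T) (h : -a * T ≤ Y) : hat a c w Y T = w Y T := by
  rw [hat, max_eq_left hT, if_pos h]

lemma hat_of_not_mem {Y T : ℝ} (hT : 0 ≤ T) (h : Y < -a * T) : hat a c w Y T = c := by
  rw [hat, max_eq_left hT, if_neg (not_le.2 h)]

lemma hat_of_le {Y T : ℝ} (hw : ∀ T, 0 ≤ T → w (-a * T) T = c) (hT : 0 ≤ T) (h : Y ≤ -a * T) :
    hat a c w Y T = c := by
  rcases h.lt_or_eq with h | h
  · exact hat_of_not_mem hT h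
  · rw [hat_of_mem hT h.ge, h, hw T hT]

lemma T0_of_nonneg {Y : ℝ} (hY : 0 ≤ Y) : T0 a Y = 0 := if_pos hY

lemma neg_mul_T0 {Y : ℝ} (ha : 0 < a) (hY : Y < 0) : -a * T0 a Y = Y := by
  rw [T0, if_neg (not_le.2 hY)]; field_simp

lemma T0_nonneg (ha : 0 ≤ a) (Y : ℝ) : 0 ≤ T0 a Y := by
  rw [T0]; split_ifs with h
  · exact le_rfl
  · exact div_nonneg (by linarith) ha

lemma pos_of_mem_neg (ha : 0 ≤ a) {Y T : ℝ} (h : -a * T ≤ Y) (hY : Y < 0) : 0 < a := by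
  rcases ha.lt_or_eq with h' | h'
  · exact h'
  · rw [← h'] at h; linarith

lemma T0_le (ha : 0 ≤ a) {Y T : ℝ} (hT : 0 ≤ T) (h : -a * T ≤ Y) : T0 a Y ≤ T := by
  rcases le_or_gt 0 Y with hY | hY
  · rwa [T0_of_nonneg hY]
  · have ha' := pos_of_mem_neg ha h hY
    have := neg_mul_T0 ha' hY
    nlinarith

lemma mem_of_T0_le (ha : 0 ≤ a) {Y T s : ℝ} (h : -a * T ≤ Y) (hs0 : 0 ≤ s)
    (hs : T0 a Y ≤ s) : -a * s ≤ Y := by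
  rcases le_or_gt 0 Y with hY | hY
  · nlinarith
  · have ha' := pos_of_mem_neg ha h hY
    have := neg_mul_T0 ha' hY
    nlinarith

lemma le_of_le_T0 (ha : 0 ≤ a) {Y T s : ℝ} (h : -a * T ≤ Y) (hs0 : 0 < s)
    (hs : s ≤ T0 a Y) : Y ≤ -a * s := by
  rcases le_or_gt 0 Y with hY | hY
  · rw [T0_of_nonneg hY] at hs; linarith
  · have ha' := pos_of_mem_neg ha h hY
    have := neg_mul_T0 ha' hY
    nlinarith

lemma continuous_hat_T (ha : 0 ≤ a) (Y : ℝ) (hw : ∀ T, 0 ≤ T → w (-a * T) T = c)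
    (hc : ∀ r, ContinuousOn (w Y) (Icc (T0 a Y) r)) : Continuous (hat a c w Y) := by
  by_cases h0 : Y < 0 ∧ a = 0
  · have : hat a c w Y = fun _ => c := by
      funext T
      rw [hat, if_neg]
      rw [h0.2]; linarith [h0.1]
    rw [this]; exact continuous_const
  · have : hat a c w Y = fun T => w Y (max T (T0 a Y)) := by
      funext T
      rcases le_or_gt 0 Y with hY | hY
      · have := le_max_right T 0
        rw [hat, if_pos (by nlinarith), T0_of_nonneg hY]
      · have ha' : 0 < a := lt_of_le_of_ne ha fun h => h0 ⟨hY, h.symm⟩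
        have e := neg_mul_T0 ha' hY
        have hpos : 0 < T0 a Y := by nlinarith
        unfold hat
        split_ifs with h
        · have h1 : T0 a Y ≤ max T 0 := by nlinarith
          have h2 : T0 a Y ≤ T := (le_max_iff.1 h1).resolve_right (not_le.2 hpos)
          rw [max_eq_left h2, max_eq_left (hpos.le.trans h2)]
        · have h1 : max T 0 < T0 a Y := by nlinarith
          rw [max_eq_right ((le_max_left _ _).trans h1.le)]
          nth_rewrite 1 [← e]
          exact (hw _ hpos.le).symm
    rw [this]; exact continuous_comp_max hc

lemma continuous_hat_Y (T : ℝ) (hw : ∀ T, 0 ≤ T → w (-a * T) T = c)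
    (hc : ∀ T, 0 ≤ T → ∀ r, ContinuousOn (fun Y => w Y T) (Icc (-a * T) r)) :
    Continuous fun Y => hat a c w Y T := by
  have ht : 0 ≤ max T 0 := le_max_right _ _
  have : (fun Y => hat a c w Y T) = fun Y => w (max Y (-a * max T 0)) (max T 0) := by
    funext Y
    unfold hat
    split_ifs with h
    · rw [max_eq_left h]
    · rw [max_eq_right (not_le.1 h).le, hw _ ht]
  rw [this]
  exact continuous_comp_max (g := fun Y => w Y (max T 0)) (hc _ ht)

/-- Any vertical integral whose integrand `Φ(u,v,ξ)` vanishes for `v = 0` may be started at `T = 0`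
once the functions are extended. -/
lemma hat_integral (ha : 0 ≤ a) {u v ξ : ℝ → ℝ → ℝ} (hv : ∀ T, 0 ≤ T → v (-a * T) T = 0)
    (Φ : ℝ → ℝ → ℝ → ℝ) (hΦ : ∀ x y, Φ x 0 y = 0) {Y T : ℝ} (hT : 0 ≤ T) (h : -a * T ≤ Y) :
    ∫ s in (0:ℝ)..T, Φ (hat a 0 u Y s) (hat a 0 v Y s) (hat a 1 ξ Y s) =
      ∫ s in (T0 a Y)..T, Φ (u Y s) (v Y s) (ξ Y s) := by
  have h0 := T0_nonneg ha Y
  have h1 := T0_le ha hT h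
  rw [integral_eq_of_zero_left h0 h1]
  · refine intervalIntegral.integral_congr ?_
    intro s hs
    rw [uIcc_of_le h1] at hs
    have hs0 := h0.trans hs.1
    have hm := mem_of_T0_le ha h hs0 hs.1
    simp only
    rw [hat_of_mem hs0 hm, hat_of_mem hs0 hm, hat_of_mem hs0 hm]
  · intro s hs
    rw [hat_of_le (w := v) hv hs.1.le (le_of_le_T0 ha h hs.1 hs.2), hΦ]

lemma hat_integral_zero (ha : 0 ≤ a) {u v ξ : ℝ → ℝ → ℝ}
    (Φ : ℝ → ℝ → ℝ → ℝ) (hΦ : ∀ x y, Φ x 0 y = 0) {Y T : ℝ} (hT : 0 ≤ T) (h : Y < -a * T) :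
    ∫ s in (0:ℝ)..T, Φ (hat a 0 u Y s) (hat a 0 v Y s) (hat a 1 ξ Y s) = 0 := by
  refine integral_eq_zero_of_forall ?_
  intro s hs
  rw [uIcc_of_le hT] at hs
  have hs' : Y < -a * s := by nlinarith [mul_le_mul_of_nonneg_left hs.2 ha]
  rw [hat_of_not_mem (w := v) hs.1 hs', hΦ]

end hat

lemma extSol_of_isSol {lam : ℝ} {f ubar vbar : ℝ → ℝ} {u v ξ : ℝ → ℝ → ℝ}
    (ha : 0 ≤ deriv f 0) (hsol : IsSolSemilinear lam f ubar vbar u v ξ) {V : ℝ → ℝ}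
    (hVc : Continuous V) (hVb : ∀ Y, |V Y| ≤ 4) (hVneg : ∀ Y, Y < 0 → V Y = 0)
    (hVpos : ∀ Y, 0 ≤ Y → V Y = vbar Y) :
    ExtSol lam (deriv f 0) (deriv (deriv f)) V (hat (deriv f 0) 0 u) (hat (deriv f 0) 0 v)
      (hat (deriv f 0) 1 ξ) := by
  obtain ⟨hLu, hLv, hinit, hbdry, hequ, heqv⟩ := hsol
  set a := deriv f 0 with hadef
  have hbu : ∀ T, 0 ≤ T → u (-a * T) T = 0 := fun T hT => (hbdry T hT).1
  have hbv : ∀ T, 0 ≤ T → v (-a * T) T = 0 := fun T hT => (hbdry T hT).2.1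
  have hbx : ∀ T, 0 ≤ T → ξ (-a * T) T = 1 := fun T hT => (hbdry T hT).2.2
  -- the values at the bottom of each vertical segment of `Ω`
  have start : ∀ Y T, -a * T ≤ Y → v Y (T0 a Y) = V Y ∧ ξ Y (T0 a Y) = 1 := by
    intro Y T h
    rcases le_or_gt 0 Y with hY | hY
    · rw [T0_of_nonneg hY, hVpos Y hY]
      exact (hinit Y hY).2
    · have e := neg_mul_T0 (pos_of_mem_neg ha h hY) hY
      have h1 := hbv _ (T0_nonneg ha Y)
      have h2 := hbx _ (T0_nonneg ha Y)
      rw [e] at h1 h2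
      exact ⟨h1.trans (hVneg Y hY).symm, h2⟩
  have negY : ∀ Y T, 0 ≤ T → Y < -a * T → Y < 0 := fun Y T hT h => by nlinarith
  refine ⟨hVc, hVb, ?_, ?_, ?_, ?_, ?_, ?_⟩
  · intro T
    refine continuous_hat_Y T hbu fun T hT r => ?_
    obtain ⟨K, hK⟩ := hLu T hT r
    exact hK.continuousOn
  · intro Y
    refine continuous_hat_T ha Y hbv fun r => ?_
    obtain ⟨K, hK⟩ := hLv Y r
    exact hK.1.continuousOn
  · intro Y
    refine continuous_hat_T ha Y hbx fun r => ?_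
    obtain ⟨K, hK⟩ := hLv Y r
    exact hK.2.continuousOn
  · intro T hT R hR Y
    have hz : ∀ z, z ≤ -a * T →
        gfun (1/(2*lam) - 1) (hat a 0 v z T) (hat a 1 ξ z T) = 0 := by
      intro z hz
      rw [hat_of_le hbv hT hz, gfun_zero]
    rcases le_or_gt (-a * T) Y with h | h
    · rw [hat_of_mem hT h, hequ (Y, T) ⟨hT, h⟩,
        integral_eq_of_zero_left (b := -R) (by linarith) h (fun z hz' => hz z hz'.2)]
      refine intervalIntegral.integral_congr ?_
      intro z hz'
      rw [uIcc_of_le h] at hz'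
      simp only
      rw [hat_of_mem hT hz'.1, hat_of_mem hT hz'.1, gfun]
    · rw [hat_of_not_mem hT h, integral_eq_zero_of_forall]
      intro z hz'
      exact hz z (hz'.2.trans (sup_le (by linarith) h.le))
  · intro T hT Y
    set Φ : ℝ → ℝ → ℝ → ℝ := fun x y _ => -2 * lam * deriv (deriv f) x * sin (y / 2) ^ 2
    have hΦ : ∀ x y, Φ x 0 y = 0 := by intro x y; simp [Φ]
    rcases le_or_gt (-a * T) Y with h | h
    · rw [hat_of_mem hT h, (heqv (Y, T) ⟨hT, h⟩).1, (start Y T h).1]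
      have := hat_integral ha (u := u) (ξ := ξ) hbv Φ hΦ hT h
      simp only [Φ] at this
      rw [this]
    · have := hat_integral_zero ha (u := u) (v := v) (ξ := ξ) Φ hΦ hT h
      simp only [Φ] at this
      rw [this, hat_of_not_mem hT h, hVneg Y (negY Y T hT h), add_zero]
  · intro T hT Y
    set Φ : ℝ → ℝ → ℝ → ℝ := fun x y z => (1/2) * deriv (deriv f) x * z * sin y
    have hΦ : ∀ x y, Φ x 0 y = 0 := by intro x y; simp [Φ]
    rcases le_or_gt (-a * T) Y with h | h
    · rw [hat_of_mem hT h, (heqv (Y, T) ⟨hT, h⟩).2, (start Y T h).2]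
      have := hat_integral ha (u := u) (ξ := ξ) hbv Φ hΦ hT h
      simp only [Φ] at this
      rw [this]
    · have := hat_integral_zero ha (u := u) (v := v) (ξ := ξ) Φ hΦ hT h
      simp only [Φ] at this
      rw [this, hat_of_not_mem hT h, add_zero]

/-! ### Convergence of the initial data -/

lemma abs_arctan_sub_le (x y : ℝ) : |arctan x - arctan y| ≤ |x - y| := by
  have := Convex.norm_image_sub_le_of_norm_hasDerivWithin_le (f := arctan)
    (f' := fun x => 1 / (1 + x ^ 2)) (s := univ) (C := 1) (x := y) (y := x)
    (fun x _ => (Real.hasDerivAt_arctan x).hasDerivWithinAt)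
    (fun x _ => by
      rw [Real.norm_eq_abs, abs_of_nonneg (by positivity), div_le_one (by positivity)]
      nlinarith [sq_nonneg x]) convex_univ (mem_univ _) (mem_univ _)
  simpa [Real.norm_eq_abs] using this

/-- The density `(1 + s²)^{1/(2λ)}` of the coordinate change. -/
noncomputable def dens (lam s : ℝ) : ℝ := (1 + s ^ 2) ^ (1/(2*lam))

lemma continuous_dens (lam : ℝ) : Continuous (dens lam) := by
  unfold dens
  exact Continuous.rpow_const (by fun_prop) (fun s => Or.inl (by positivity))

lemma one_le_dens {lam : ℝ} (hlam : 0 < lam) (s : ℝ) : 1 ≤ dens lam s :=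
  Real.one_le_rpow (by nlinarith [sq_nonneg s]) (by positivity)

section data
variable {lam : ℝ} {w : ℝ → ℝ}

lemma continuous_dens_deriv (lam : ℝ) (hw : ContDiff ℝ 1 w) :
    Continuous fun y => dens lam (deriv w y) :=
  (continuous_dens lam).comp (hw.continuous_deriv le_rfl)

lemma Yfun_expand (hlam : 0 < lam) (hw : ContDiff ℝ 1 w) {x x' : ℝ} (h : x ≤ x') :
    x' - x ≤ Yfun lam w x' - Yfun lam w x := by
  have hc := continuous_dens_deriv lam hw
  have e : Yfun lam w x' - Yfun lam w x = ∫ y in x..x', dens lam (deriv w y) :=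
    intervalIntegral.integral_interval_sub_left (hc.intervalIntegrable _ _)
      (hc.intervalIntegrable _ _)
  have h1 : ∫ _ in x..x', (1:ℝ) ≤ ∫ y in x..x', dens lam (deriv w y) :=
    intervalIntegral.integral_mono_on h intervalIntegrable_const (hc.intervalIntegrable _ _)
      (fun y _ => one_le_dens hlam _)
  rw [e]
  simpa using h1

lemma abs_sub_le_Yfun (hlam : 0 < lam) (hw : ContDiff ℝ 1 w) (x x' : ℝ) :
    |x - x'| ≤ |Yfun lam w x - Yfun lam w x'| := by
  rcases le_total x x' with h | h
  · have := Yfun_expand hlam hw h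
    rw [abs_sub_comm, abs_sub_comm (Yfun lam w x), abs_of_nonneg (sub_nonneg.2 h)]
    exact this.trans (le_abs_self _)
  · have := Yfun_expand hlam hw h
    rw [abs_of_nonneg (sub_nonneg.2 h)]
    exact this.trans (le_abs_self _)

lemma Yfun_zero : Yfun lam w 0 = 0 := by simp [Yfun]

lemma continuous_Yfun (hw : ContDiff ℝ 1 w) : Continuous (Yfun lam w) :=
  intervalIntegral.continuous_primitive
    (fun a b => (continuous_dens_deriv lam hw).intervalIntegrable a b) 0

lemma exists_inverse (hlam : 0 < lam) (hw : ContDiff ℝ 1 w) (Y : ℝ) :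
    ∃ x, 0 ≤ Y → 0 ≤ x ∧ x ≤ Y ∧ Yfun lam w x = Y := by
  by_cases hY : 0 ≤ Y
  · have h1 := Yfun_expand hlam hw hY
    rw [Yfun_zero, sub_zero, sub_zero] at h1
    obtain ⟨x, hx, hxY⟩ := intermediate_value_Icc hY (continuous_Yfun (lam := lam) hw).continuousOn
      (show Y ∈ Icc (Yfun lam w 0) (Yfun lam w Y) from ⟨by rwa [Yfun_zero], h1⟩)
    exact ⟨x, fun _ => ⟨hx.1, hx.2, hxY⟩⟩
  · exact ⟨0, fun h => absurd h hY⟩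

/-- `X` is a right inverse of the coordinate change `Yfun lam w` on `[0,∞)`. -/
def IsInv (lam : ℝ) (w X : ℝ → ℝ) : Prop :=
  ∀ Y, 0 ≤ Y → 0 ≤ X Y ∧ X Y ≤ Y ∧ Yfun lam w (X Y) = Y

/-- The initial value of `v`, extended by `0` to `Y < 0` (recall `w'(0) = 0`). -/
noncomputable def Vof (w X : ℝ → ℝ) (Y : ℝ) : ℝ := 2 * arctan (deriv w (X (max Y 0)))

lemma IsInv.lip {X : ℝ → ℝ} (hX : IsInv lam w X) (hlam : 0 < lam) (hw : ContDiff ℝ 1 w)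
    {Y Y' : ℝ} (hY : 0 ≤ Y) (hY' : 0 ≤ Y') : |X Y - X Y'| ≤ |Y - Y'| := by
  have := abs_sub_le_Yfun hlam hw (X Y) (X Y')
  rwa [(hX Y hY).2.2, (hX Y' hY').2.2] at this

lemma continuous_Vof {X : ℝ → ℝ} (hX : IsInv lam w X) (hlam : 0 < lam) (hw : ContDiff ℝ 1 w) :
    Continuous (Vof w X) := by
  have h1 : ContinuousOn X (Ici 0) := by
    refine LipschitzOnWith.continuousOn (K := 1) (LipschitzOnWith.of_dist_le_mul ?_)
    intro Y hY Y' hY'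
    simpa [Real.dist_eq] using hX.lip hlam hw hY hY'
  have h2 : Continuous fun Y => X (max Y 0) :=
    h1.comp_continuous (by fun_prop) (fun t => mem_Ici.2 (le_max_right _ _))
  exact continuous_const.mul (continuous_arctan.comp ((hw.continuous_deriv le_rfl).comp h2))

lemma abs_Vof_le (w X : ℝ → ℝ) (Y : ℝ) : |Vof w X Y| ≤ 4 := by
  unfold Vof
  have h1 := Real.arctan_lt_pi_div_two (deriv w (X (max Y 0)))
  have h2 := Real.neg_pi_div_two_lt_arctan (deriv w (X (max Y 0)))
  have h3 := Real.pi_le_four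
  rw [abs_le]
  constructor <;> linarith

lemma Vof_neg {X : ℝ → ℝ} (hX : IsInv lam w X) (hw' : deriv w 0 = 0) {Y : ℝ} (hY : Y ≤ 0) :
    Vof w X Y = 0 := by
  have h := hX 0 le_rfl
  have : X 0 = 0 := le_antisymm h.2.1 h.1
  rw [Vof, max_eq_right hY, this, hw', arctan_zero, mul_zero]

lemma Vof_pos {X ubar vbar : ℝ → ℝ} (hX : IsInv lam w X) (hd : DataOf lam w ubar vbar) {Y : ℝ}
    (hY : 0 ≤ Y) : Vof w X Y = vbar Y := by
  have h := hX Y hY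
  rw [Vof, max_eq_left hY, ← (hd (X Y) h.1).2, h.2.2]

end data

/-- Convergence of the initial values of `v` in the coordinate `Y`, uniformly on `Y ≤ r`: the
coordinate changes converge uniformly on `[0,r]`, and their inverses are `1`-Lipschitz. -/
lemma Vof_conv {lam : ℝ} (hlam : 0 < lam) {w X : ℝ → ℝ} (hw : ContDiff ℝ 1 w)
    (hX : IsInv lam w X) {wk Xk : ℕ → ℝ → ℝ} (hwk : ∀ k, ContDiff ℝ 1 (wk k))
    (hXk : ∀ k, IsInv lam (wk k) (Xk k)) {r : ℝ} (hr : 0 ≤ r)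
    (hconv : TendstoUniformlyOn (fun k x => deriv (wk k) x) (deriv w) atTop (Icc 0 r))
    {ε : ℝ} (hε : 0 < ε) :
    ∀ᶠ k in atTop, ∀ Y ≤ r, |Vof (wk k) (Xk k) Y - Vof w X Y| ≤ ε := by
  have hwc : Continuous (deriv w) := hw.continuous_deriv le_rfl
  -- uniform continuity of `w'` on `[0,r]`
  obtain ⟨δ, hδ, hδw⟩ := Metric.uniformContinuousOn_iff.1
    (isCompact_Icc.uniformContinuousOn_of_continuous (s := Icc (0:ℝ) r) hwc.continuousOn)
    (ε / 4) (by positivity)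
  obtain ⟨B, hB⟩ := (isCompact_Icc (a := (0:ℝ)) (b := r)).exists_bound_of_continuousOn
    hwc.continuousOn
  -- uniform continuity of the density on a neighbourhood of the range of `w'`
  obtain ⟨η, hη, hηd⟩ := Metric.uniformContinuousOn_iff.1
    (isCompact_Icc.uniformContinuousOn_of_continuous (s := Icc (-(B + 1)) (B + 1))
      (continuous_dens lam).continuousOn) (δ / (2 * (r + 1))) (by positivity)
  have hmin : 0 < min (ε / 4) (min η 1) := by positivity
  filter_upwards [Metric.tendstoUniformlyOn_iff.1 hconv _ hmin] with k hk
  have hk' : ∀ x ∈ Icc 0 r, |deriv (wk k) x - deriv w x| < min (ε / 4) (min η 1) := by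
    intro x hx
    have := hk x hx
    rwa [dist_comm, Real.dist_eq] at this
  have hdens : ∀ x ∈ Icc 0 r,
      |dens lam (deriv w x) - dens lam (deriv (wk k) x)| ≤ δ / (2 * (r + 1)) := by
    intro x hx
    have h1 := hk' x hx
    have h2 : |deriv (wk k) x - deriv w x| < 1 :=
      h1.trans_le ((min_le_right _ _).trans (min_le_right _ _))
    have h3 : |deriv (wk k) x - deriv w x| < η :=
      h1.trans_le ((min_le_right _ _).trans (min_le_left _ _))
    have h4 := hB x hx
    rw [Real.norm_eq_abs, abs_le] at h4
    have h5 := abs_lt.1 h2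
    have := hηd (deriv w x) ⟨by linarith [h4.1], by linarith [h4.2]⟩ (deriv (wk k) x)
      ⟨by linarith [h4.1], by linarith [h4.2]⟩ (by rwa [dist_comm, Real.dist_eq])
    rw [Real.dist_eq] at this
    exact this.le
  have hYf : ∀ x ∈ Icc 0 r, |Yfun lam w x - Yfun lam (wk k) x| < δ := by
    intro x hx
    have e : Yfun lam w x - Yfun lam (wk k) x =
        ∫ y in (0:ℝ)..x, (dens lam (deriv w y) - dens lam (deriv (wk k) y)) :=
      (intervalIntegral.integral_sub
        ((continuous_dens_deriv lam hw).intervalIntegrable _ _)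
        ((continuous_dens_deriv lam (hwk k)).intervalIntegrable _ _)).symm
    rw [e]
    have := intervalIntegral.norm_integral_le_of_norm_le_const (a := 0) (b := x)
      (f := fun y => dens lam (deriv w y) - dens lam (deriv (wk k) y))
      (C := δ / (2 * (r + 1))) (by
        intro y hy
        rw [uIoc_of_le hx.1] at hy
        exact hdens y ⟨hy.1.le, hy.2.trans hx.2⟩)
    refine this.trans_lt ?_
    rw [sub_zero, abs_of_nonneg hx.1]
    calc δ / (2 * (r + 1)) * x ≤ δ / (2 * (r + 1)) * (r + 1) := by
          gcongr; linarith [hx.2]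
      _ = δ / 2 := by field_simp
      _ < δ := by linarith
  intro Y hY
  have hZ0 : 0 ≤ max Y 0 := le_max_right _ _
  have hZr : max Y 0 ≤ r := max_le hY hr
  unfold Vof
  set Z := max Y 0
  obtain ⟨a1, a2, a3⟩ := hX Z hZ0
  obtain ⟨b1, b2, b3⟩ := hXk k Z hZ0
  have hx : X Z ∈ Icc 0 r := ⟨a1, a2.trans hZr⟩
  have hxk : Xk k Z ∈ Icc 0 r := ⟨b1, b2.trans hZr⟩
  have hdist : |Xk k Z - X Z| < δ := by
    refine (abs_sub_le_Yfun hlam hw _ _).trans_lt ?_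
    have := hYf _ hxk
    rw [b3] at this
    rwa [a3]
  have c1 := hδw _ hxk _ hx (by rwa [Real.dist_eq])
  rw [Real.dist_eq] at c1
  have c2 := (hk' _ hxk).trans_le (min_le_left _ _)
  rw [← mul_sub, abs_mul, abs_two]
  have c3 := abs_arctan_sub_le (deriv (wk k) (Xk k Z)) (deriv w (X Z))
  have c4 := abs_sub_le (deriv (wk k) (Xk k Z)) (deriv w (Xk k Z)) (deriv w (X Z))
  linarith

/-- stability: if `C¹` data `w₀ᵏ` converge to `w₀` together with
their derivatives, uniformly on bounded subsets of `[0,∞)`, then the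
corresponding solutions of the semi-linear system converge uniformly on every
bounded subset of `Ω`. -/
theorem stmt3 (lam : ℝ) (hlam : 0 < lam ∧ lam ≤ 1/2)
    (f : ℝ → ℝ) (hf : ContDiff ℝ 2 f) (hf0 : 0 ≤ deriv f 0)
    (hfLip : ∃ L : ℝ, ∀ a b : ℝ, |deriv (deriv f) a - deriv (deriv f) b| ≤ L * |a - b|)
    (hfbd : ∃ M : ℝ, ∀ a : ℝ, |deriv (deriv f) a| ≤ M)
    -- the limit datum and its solution
    (w₀ : ℝ → ℝ) (hw₀ : ContDiff ℝ 1 w₀) (hw₀0 : w₀ 0 = 0) (hw₀'0 : deriv w₀ 0 = 0)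
    (ubar vbar : ℝ → ℝ) (hdata : DataOf lam w₀ ubar vbar)
    (u v ξ : ℝ → ℝ → ℝ) (hsol : IsSolSemilinear lam f ubar vbar u v ξ)
    -- the approximating data and their solutions
    (w₀k : ℕ → ℝ → ℝ) (hw₀k : ∀ k, ContDiff ℝ 1 (w₀k k))
    (hw₀k0 : ∀ k, w₀k k 0 = 0) (hw₀k'0 : ∀ k, deriv (w₀k k) 0 = 0)
    (ubark vbark : ℕ → ℝ → ℝ) (hdatak : ∀ k, DataOf lam (w₀k k) (ubark k) (vbark k))
    (uk vk ξk : ℕ → ℝ → ℝ → ℝ)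
    (hsolk : ∀ k, IsSolSemilinear lam f (ubark k) (vbark k) (uk k) (vk k) (ξk k))
    -- uniform convergence of the data on bounded subsets of [0,∞)
    (hconv : ∀ S : Set ℝ, S ⊆ Ici 0 → Bornology.IsBounded S →
      TendstoUniformlyOn (fun k x => w₀k k x) w₀ atTop S ∧
      TendstoUniformlyOn (fun k x => deriv (w₀k k) x) (deriv w₀) atTop S) :
    -- uniform convergence of the solutions on bounded subsets of Ω
    ∀ S : Set (ℝ × ℝ), S ⊆ OmegaDom (deriv f 0) → Bornology.IsBounded S →
      TendstoUniformlyOn (fun k p => uk k p.1 p.2) (fun p => u p.1 p.2) atTop S ∧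
      TendstoUniformlyOn (fun k p => vk k p.1 p.2) (fun p => v p.1 p.2) atTop S ∧
      TendstoUniformlyOn (fun k p => ξk k p.1 p.2) (fun p => ξ p.1 p.2) atTop S := by
  intro S hSΩ hSb
  obtain ⟨L, hL⟩ := hfLip
  obtain ⟨M, hM⟩ := hfbd
  have hF : CoeffBound (deriv (deriv f)) (max L 0) M :=
    ⟨le_max_right _ _, hM, fun x y => (hL x y).trans
      (mul_le_mul_of_nonneg_right (le_max_left _ _) (abs_nonneg _))⟩
  choose X hX using exists_inverse (lam := lam) hlam.1 hw₀
  choose Xk hXk using fun k => exists_inverse (lam := lam) hlam.1 (hw₀k k)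
  have hE := extSol_of_isSol hf0 hsol (continuous_Vof hX hlam.1 hw₀) (abs_Vof_le _ _)
    (fun Y hY => Vof_neg hX hw₀'0 hY.le) (fun Y hY => Vof_pos hX hdata hY)
  have hEk := fun k => extSol_of_isSol hf0 (hsolk k) (continuous_Vof (hXk k) hlam.1 (hw₀k k))
    (abs_Vof_le _ _) (fun Y hY => Vof_neg (hXk k) (hw₀k'0 k) hY.le)
    (fun Y hY => Vof_pos (hXk k) (hdatak k) hY)
  -- a square containing `S`
  obtain ⟨ρ, hρ⟩ := hSb.subset_closedBall (0 : ℝ × ℝ)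
  set r := max ρ 0
  have hr : 0 ≤ r := le_max_right _ _
  have hSr : ∀ p ∈ S, p.1 ≤ r ∧ p.2 ∈ Icc 0 r ∧ p.1 ∈ Icc (-(deriv f 0 * r)) r := by
    intro p hp
    have h1 := hρ hp
    rw [mem_closedBall_zero_iff, Prod.norm_def, max_le_iff] at h1
    have h2 := hSΩ hp
    have h3 : p.1 ≤ r := ((le_abs_self _).trans h1.1).trans (le_max_left _ _)
    have h4 : p.2 ≤ r := ((le_abs_self _).trans h1.2).trans (le_max_left _ _)
    refine ⟨h3, ⟨h2.1, h4⟩, ?_, h3⟩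
    have := mul_le_mul_of_nonneg_left h4 hf0
    linarith [h2.2]
  obtain ⟨C, hC, hstab⟩ := stability hF hlam hf0 hr hr
  have key : ∀ ε > 0, ∀ᶠ k in atTop, ∀ p ∈ S,
      |uk k p.1 p.2 - u p.1 p.2| < ε ∧ |vk k p.1 p.2 - v p.1 p.2| < ε ∧
      |ξk k p.1 p.2 - ξ p.1 p.2| < ε := by
    intro ε hε
    have hη : 0 < ε / (C + 1) := by positivity
    filter_upwards [Vof_conv hlam.1 hw₀ hX hw₀k hXk hr
      (hconv (Icc 0 r) (fun x hx => hx.1) (Metric.isBounded_Icc _ _)).2 hη] with k hk p hp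
    obtain ⟨_, hT, hY⟩ := hSr p hp
    have h := hstab _ _ _ _ _ _ _ _ (hEk k) hE _ hη.le (fun Y hY => hk Y hY.2) p.1 hY p.2 hT
    have hΩ := hSΩ hp
    simp only [hat_of_mem hΩ.1 hΩ.2] at h
    have hlt : C * (ε / (C + 1)) < ε := by
      rw [mul_div_assoc', div_lt_iff₀ (by positivity)]
      nlinarith
    exact ⟨h.1.trans_lt hlt, h.2.1.trans_lt hlt, h.2.2.trans_lt hlt⟩
  refine ⟨?_, ?_, ?_⟩ <;> rw [Metric.tendstoUniformlyOn_iff] <;> intro ε hε <;>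
    filter_upwards [key ε hε] with k hk p hp <;> rw [dist_comm, Real.dist_eq]
  exacts [(hk p hp).1, (hk p hp).2.1, (hk p hp).2.2]
end

section
/- Let λ ∈ (0, 1/2], let f : ℝ → ℝ be C², and let u be a C² function on an open subset of ℝ² (with coordinates (x,t)) satisfying equation (E1): u_{tx} + f'(u) u_{xx} + λ f''(u) (u_x)² = 0. Then the energy law ∂_t(|u_x|^{1/λ}) + ∂_x( f'(u) |u_x|^{1/λ} ) = 0 holds pointwise; in particular the function |u_x|^{1/λ} (which is C¹ since 1/λ ≥ 2 and u_x is C¹) satisfies this conservation law. -/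
/-!
Write `g r = |r| ^ (1/lam)`, a `C¹` function with `g' r = (1/lam) |r| ^ (1/lam - 2) r`, because
`1/lam > 1`. By the chain rule and the symmetry `u_{xt} = u_{tx}`, the left side of the energy law
is `g'(u_x) (u_{tx} + f'(u) u_{xx}) + f''(u) u_x g(u_x)`. Equation (E1) turns the bracket into
`-lam f''(u) u_x²`, and the two terms cancel by the Euler-type identity
`lam * g' r * r² = r * g r` (`lam_mul_deriv_abs_rpow`).
-/

open Real

/-- Partial derivative in the spatial direction `x` (first coordinate). -/
noncomputable def px (φ : ℝ × ℝ → ℝ) (p : ℝ × ℝ) : ℝ := fderiv ℝ φ p (1, 0)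

/-- Partial derivative in the time direction `t` (second coordinate). -/
noncomputable def pt (φ : ℝ × ℝ → ℝ) (p : ℝ × ℝ) : ℝ := fderiv ℝ φ p (0, 1)

lemma lam_mul_deriv_abs_rpow {lam : ℝ} (hlam : 0 < lam) (r : ℝ) :
    lam * ((1/lam) * |r| ^ (1/lam - 2) * r) * r ^ 2 = r * |r| ^ (1/lam) := by
  rcases eq_or_ne r 0 with rfl | hr
  · simp
  · have h : |r| ^ (1/lam) = |r| ^ (1/lam - 2) * r ^ 2 := by
      rw [← sq_abs r, ← Real.rpow_natCast |r| 2, ← Real.rpow_add (abs_pos.mpr hr)]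
      norm_num
    rw [h]
    field_simp

/-- The derivative of a `C²` function in a fixed direction is `C¹`. -/
lemma contDiffOn_fderiv_apply {U : Set (ℝ × ℝ)} (hU : IsOpen U) {u : ℝ × ℝ → ℝ}
    (hu : ContDiffOn ℝ 2 u U) (v : ℝ × ℝ) :
    ContDiffOn ℝ 1 (fun q => fderiv ℝ u q v) U :=
  (hu.fderiv_of_isOpen hU (by norm_num)).clm_apply contDiffOn_const

lemma pt_px_eq_px_pt {U : Set (ℝ × ℝ)} (hU : IsOpen U) {u : ℝ × ℝ → ℝ}
    (hu : ContDiffOn ℝ 2 u U) {p : ℝ × ℝ} (hp : p ∈ U) : pt (px u) p = px (pt u) p := by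
  have hd : DifferentiableAt ℝ (fderiv ℝ u) p :=
    ((hu.fderiv_of_isOpen hU (m := 1) (by norm_num)).contDiffAt (hU.mem_nhds hp)).differentiableAt
      (by norm_num)
  have hsymm : IsSymmSndFDerivAt ℝ u p :=
    (hu.contDiffAt (hU.mem_nhds hp)).isSymmSndFDerivAt (by simp)
  have key : ∀ v w : ℝ × ℝ,
      fderiv ℝ (fun q => fderiv ℝ u q v) p w = fderiv ℝ (fderiv ℝ u) p w v := by
    intro v w
    rw [fderiv_clm_apply hd (differentiableAt_const v)]
    simp
  change fderiv ℝ (fun q => fderiv ℝ u q (1, 0)) p (0, 1)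
    = fderiv ℝ (fun q => fderiv ℝ u q (0, 1)) p (1, 0)
  rw [key, key]
  exact hsymm _ _

/-- for `λ ∈ (0,1/2]` and a `C²` solution `u` of (E1)
`u_{tx} + f'(u) u_{xx} + λ f''(u) (u_x)² = 0`, the function `|u_x|^{1/λ}` is `C¹`
and the energy law `∂_t(|u_x|^{1/λ}) + ∂_x(f'(u) |u_x|^{1/λ}) = 0` holds pointwise. -/
theorem stmt4 (lam : ℝ) (hlam : 0 < lam ∧ lam ≤ 1/2)
    (f : ℝ → ℝ) (hf : ContDiff ℝ 2 f)
    (U : Set (ℝ × ℝ)) (hU : IsOpen U) (u : ℝ × ℝ → ℝ)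
    (hu : ContDiffOn ℝ 2 u U)
    (hE1 : ∀ p ∈ U,
      px (pt u) p + deriv f (u p) * px (px u) p
        + lam * deriv (deriv f) (u p) * (px u p) ^ 2 = 0) :
    ContDiffOn ℝ 1 (fun q => |px u q| ^ (1/lam)) U ∧
    ∀ p ∈ U,
      pt (fun q => |px u q| ^ (1/lam)) p
        + px (fun q => deriv f (u q) * |px u q| ^ (1/lam)) p = 0 := by
  obtain ⟨hpos, hle⟩ := hlam
  have hexp : 1 < 1/lam := by
    rw [lt_div_iff₀ hpos]
    linarith
  have hpx : ContDiffOn ℝ 1 (px u) U := contDiffOn_fderiv_apply hU hu (1, 0)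
  refine ⟨?_, fun p hp => ?_⟩
  · have hg : ContDiff ℝ 1 (fun r : ℝ => ‖r‖ ^ (1/lam)) := contDiff_norm_rpow hexp
    exact hg.comp_contDiffOn hpx
  · have hpxd : HasFDerivAt (px u) (fderiv ℝ (px u) p) p :=
      ((hpx.contDiffAt (hU.mem_nhds hp)).differentiableAt (by norm_num)).hasFDerivAt
    have hud : HasFDerivAt u (fderiv ℝ u p) p :=
      ((hu.contDiffAt (hU.mem_nhds hp)).differentiableAt (by norm_num)).hasFDerivAt
    have hf' : HasDerivAt (deriv f) (deriv (deriv f) (u p)) (u p) :=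
      (((contDiff_succ_iff_deriv (n := 1)).1 hf).2.2.differentiable (by norm_num) _).hasDerivAt
    have hG := (hasDerivAt_abs_rpow (px u p) hexp).comp_hasFDerivAt p hpxd
    have hF := hf'.comp_hasFDerivAt p hud
    have h1 : pt (fun q => |px u q| ^ (1/lam)) p
        = ((1/lam) * |px u p| ^ (1/lam - 2) * px u p) * pt (px u) p := by
      rw [pt]
      erw [hG.fderiv]
      rfl
    have h2 : px (fun q => deriv f (u q) * |px u q| ^ (1/lam)) p
        = deriv f (u p) * (((1/lam) * |px u p| ^ (1/lam - 2) * px u p) * px (px u) p)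
          + |px u p| ^ (1/lam) * (deriv (deriv f) (u p) * px u p) := by
      rw [px]
      erw [(hF.mul hG).fderiv]
      rfl
    rw [h1, h2, pt_px_eq_px_pt hU hu hp]
    linear_combination ((1/lam) * |px u p| ^ (1/lam - 2) * px u p) * hE1 p hp
      - deriv (deriv f) (u p) * lam_mul_deriv_abs_rpow hpos (px u p)
end

section
/- Let λ ∈ ℝ, let f : ℝ → ℝ be C², and let u be a C³ function on an open subset of ℝ² satisfying equation (E1): u_{tx} + f'(u) u_{xx} + λ f''(u) (u_x)² = 0. Define v := 2 arctan(u_x). Then v is C¹ and satisfies v_t + f'(u) v_x = −2λ f''(u) sin²(v/2) pointwise. -/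
/-!
By symmetry of second derivatives `u_{xt} = u_{tx}`, and the chain rule for `2 arctan` multiplies
each first derivative of `R = u_x` by `2 / (1 + R²)`. Multiplying (E1) by that factor gives
`v_t + f'(u) v_x = -2 λ f''(u) R² / (1 + R²)`, and `sin² (arctan R) = R² / (1 + R²)`.
-/

open Real

/-- for a `C³` solution `u` of (E1)
`u_{tx} + f'(u) u_{xx} + λ f''(u) (u_x)² = 0`, the angle variable
`v := 2 arctan(u_x)` is `C¹` and satisfies `v_t + f'(u) v_x = −2λ f''(u) sin²(v/2)`. -/
theorem stmt6 (lam : ℝ) (f : ℝ → ℝ) (hf : ContDiff ℝ 2 f)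
    (U : Set (ℝ × ℝ)) (hU : IsOpen U) (u : ℝ × ℝ → ℝ)
    (hu : ContDiffOn ℝ 3 u U)
    (hE1 : ∀ p ∈ U,
      px (pt u) p + deriv f (u p) * px (px u) p
        + lam * deriv (deriv f) (u p) * (px u p) ^ 2 = 0) :
    ContDiffOn ℝ 1 (fun q => 2 * arctan (px u q)) U ∧
    ∀ p ∈ U,
      pt (fun q => 2 * arctan (px u q)) p
        + deriv f (u p) * px (fun q => 2 * arctan (px u q)) p
        = -2 * lam * deriv (deriv f) (u p) * sin ((2 * arctan (px u p)) / 2) ^ 2 := by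
  have hfd : ContDiffOn ℝ 2 (fderiv ℝ u) U := hu.fderiv_of_isOpen hU (by norm_num)
  have hpx : ContDiffOn ℝ 2 (px u) U := hfd.clm_apply contDiffOn_const
  refine ⟨contDiffOn_const.mul (hpx.arctan.of_le (by norm_num)), fun p hp => ?_⟩
  have hUp : U ∈ nhds p := hU.mem_nhds hp
  have hdd : DifferentiableAt ℝ (fderiv ℝ u) p :=
    (hfd.contDiffAt hUp).differentiableAt (by norm_num)
  have hdx : DifferentiableAt ℝ (px u) p :=
    (hpx.contDiffAt hUp).differentiableAt (by norm_num)
  -- Partial derivatives of a directional derivative are values of the second derivative.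
  have hsecond : ∀ a b : ℝ × ℝ,
      fderiv ℝ (fun q => fderiv ℝ u q a) p b = fderiv ℝ (fderiv ℝ u) p b a := by
    intro a b
    rw [fderiv_clm_apply hdd (differentiableAt_const a)]
    simp
  have hsymm : IsSymmSndFDerivAt ℝ u p :=
    (hu.contDiffAt hUp).isSymmSndFDerivAt (by simp; norm_num)
  have hcomm : px (pt u) p = pt (px u) p :=
    (hsecond (0, 1) (1, 0)).trans
      ((hsymm.eq (1, 0) (0, 1)).trans (hsecond (1, 0) (0, 1)).symm)
  have hchain : ∀ b : ℝ × ℝ, fderiv ℝ (fun q => 2 * arctan (px u q)) p b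
      = 2 / (1 + px u p ^ 2) * fderiv ℝ (px u) p b := by
    intro b
    rw [(hdx.hasFDerivAt.arctan.const_mul 2).fderiv]
    simp only [smul_apply, smul_eq_mul]
    ring
  have hE := hE1 p hp
  rw [hcomm] at hE
  have hsin : sin ((2 * arctan (px u p)) / 2) ^ 2 = px u p ^ 2 / (1 + px u p ^ 2) := by
    rw [mul_div_cancel_left₀ _ two_ne_zero, sin_sq_arctan]
  rw [hsin]
  have ht : pt (fun q => 2 * arctan (px u q)) p = 2 / (1 + px u p ^ 2) * pt (px u) p :=
    hchain (0, 1)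
  have hx : px (fun q => 2 * arctan (px u q)) p = 2 / (1 + px u p ^ 2) * px (px u) p :=
    hchain (1, 0)
  rw [ht, hx]
  linear_combination (2 / (1 + px u p ^ 2)) * hE
end

section
/- Let λ > 0, let f : ℝ → ℝ be C², let u be a C³ function on an open subset U of ℝ² satisfying equation (E1): u_{tx} + f'(u) u_{xx} + λ f''(u) (u_x)² = 0, and let Y be a C² function on U with Y_t + f'(u) Y_x = 0 and Y_x > 0 on U. Define ξ := (1 + u_x²)^{1/(2λ)} / Y_x. Then ξ_t + f'(u) ξ_x = f''(u) ξ u_x / (1 + u_x²) pointwise; equivalently, with v := 2 arctan(u_x), ξ_t + f'(u) ξ_x = (1/2) f''(u) ξ sin v. -/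
/-! The proof differentiates `ξ` along characteristics. Write `D = ∂ₜ + f'(u) ∂ₓ` and `a = u_x`.
By symmetry of second derivatives (`px_pt_comm`), (E1) says `D a = -λ f''(u) a²`, and
differentiating `Y_t + f'(u) Y_x = 0` in `x` gives `D Y_x = -f''(u) a Y_x`. With the chain rule
for `ξ = (1 + a²)^{1/(2λ)} / Y_x` (`fderiv_xi`) this yields
`D ξ = ξ f''(u) (-a³ / (1 + a²) + a) = f''(u) ξ a / (1 + a²)`.
The second form follows from `sin (2 arctan a) = 2 a / (1 + a²)`. -/

open Real

lemma differentiableAt_fderiv_apply {φ : ℝ × ℝ → ℝ} {p : ℝ × ℝ} (h : ContDiffAt ℝ 2 φ p)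
    (v : ℝ × ℝ) : DifferentiableAt ℝ (fun q => fderiv ℝ φ q v) p := by
  have h1 : DifferentiableAt ℝ (fderiv ℝ φ) p :=
    (h.fderiv_right (m := 1) (by norm_num)).differentiableAt (by norm_num)
  exact h1.clm_apply (differentiableAt_const v)

lemma fderiv_fderiv_apply {φ : ℝ × ℝ → ℝ} {p : ℝ × ℝ} (h : ContDiffAt ℝ 2 φ p)
    (v w : ℝ × ℝ) :
    fderiv ℝ (fun q => fderiv ℝ φ q v) p w = fderiv ℝ (fderiv ℝ φ) p w v := by
  have h1 : DifferentiableAt ℝ (fderiv ℝ φ) p :=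
    (h.fderiv_right (m := 1) (by norm_num)).differentiableAt (by norm_num)
  rw [fderiv_clm_apply h1 (differentiableAt_const v)]
  simp

lemma px_pt_comm {φ : ℝ × ℝ → ℝ} {p : ℝ × ℝ} (h : ContDiffAt ℝ 2 φ p) :
    px (pt φ) p = pt (px φ) p := by
  have h1 := fderiv_fderiv_apply h (0, 1) (1, 0)
  have h2 := fderiv_fderiv_apply h (1, 0) (0, 1)
  have h3 : IsSymmSndFDerivAt ℝ φ p := h.isSymmSndFDerivAt (by simp)
  exact h1.trans ((h3 _ _).trans h2.symm)

/-- Chain rule for `(1 + a²)^k / b`, with the real power `(1 + a²)^k` factored out. -/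
lemma fderiv_xi {a b : ℝ × ℝ → ℝ} {p : ℝ × ℝ} (k : ℝ) (ha : DifferentiableAt ℝ a p)
    (hb : DifferentiableAt ℝ b p) (hb0 : b p ≠ 0) (v : ℝ × ℝ) :
    fderiv ℝ (fun q => (1 + (a q) ^ 2) ^ k / b q) p v
      = (1 + (a p) ^ 2) ^ k / b p
        * (2 * k * a p * fderiv ℝ a p v / (1 + (a p) ^ 2) - fderiv ℝ b p v / b p) := by
  have hpos : 0 < 1 + (a p) ^ 2 := by positivity
  have hbase : HasFDerivAt (fun q => 1 + (a q) ^ 2) _ p :=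
    ((hasDerivAt_pow 2 (a p)).comp_hasFDerivAt p ha.hasFDerivAt).const_add 1
  have hpow := hbase.rpow_const (p := k) (Or.inl hpos.ne')
  have hinv : HasFDerivAt (fun q => (b q)⁻¹) _ p :=
    (hasDerivAt_inv hb0).comp_hasFDerivAt p hb.hasFDerivAt
  simp only [div_eq_mul_inv]
  rw [(hpow.fun_mul hinv).fderiv, Real.rpow_sub_one hpos.ne']
  simp
  field_simp
  ring

/-- let `u` be a `C³` solution of (E1)
`u_{tx} + f'(u) u_{xx} + λ f''(u) (u_x)² = 0` and let `Y` be a `C²` function with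
`Y_t + f'(u) Y_x = 0` and `Y_x > 0`.  Then `ξ := (1+u_x²)^{1/(2λ)}/Y_x` satisfies
`ξ_t + f'(u) ξ_x = f''(u) ξ u_x/(1+u_x²) = (1/2) f''(u) ξ sin v` with `v = 2 arctan u_x`. -/
theorem stmt7 (lam : ℝ) (hlam : 0 < lam) (f : ℝ → ℝ) (hf : ContDiff ℝ 2 f)
    (U : Set (ℝ × ℝ)) (hU : IsOpen U) (u Y : ℝ × ℝ → ℝ)
    (hu : ContDiffOn ℝ 3 u U) (hY : ContDiffOn ℝ 2 Y U)
    (hE1 : ∀ p ∈ U,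
      px (pt u) p + deriv f (u p) * px (px u) p
        + lam * deriv (deriv f) (u p) * (px u p) ^ 2 = 0)
    (hYchar : ∀ p ∈ U, pt Y p + deriv f (u p) * px Y p = 0)
    (hYx : ∀ p ∈ U, 0 < px Y p) :
    ∀ p ∈ U,
      (pt (fun q => (1 + (px u q) ^ 2) ^ (1/(2*lam)) / px Y q) p
          + deriv f (u p) * px (fun q => (1 + (px u q) ^ 2) ^ (1/(2*lam)) / px Y q) p
        = deriv (deriv f) (u p) * ((1 + (px u p) ^ 2) ^ (1/(2*lam)) / px Y p) * px u p
            / (1 + (px u p) ^ 2)) ∧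
      (pt (fun q => (1 + (px u q) ^ 2) ^ (1/(2*lam)) / px Y q) p
          + deriv f (u p) * px (fun q => (1 + (px u q) ^ 2) ^ (1/(2*lam)) / px Y q) p
        = (1/2) * deriv (deriv f) (u p) * ((1 + (px u p) ^ 2) ^ (1/(2*lam)) / px Y p)
            * sin (2 * arctan (px u p))) := by
  intro p hp
  have hUn : U ∈ nhds p := hU.mem_nhds hp
  have hu2 : ContDiffAt ℝ 2 u p := (hu.contDiffAt hUn).of_le (by norm_num)
  have hY2 : ContDiffAt ℝ 2 Y p := hY.contDiffAt hUn
  have hdu : DifferentiableAt ℝ u p := hu2.differentiableAt (by norm_num)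
  have hdf : DifferentiableAt ℝ (deriv f) (u p) :=
    ((contDiff_succ_iff_deriv (n := 1)).1 hf).2.2.differentiable (by norm_num) _
  have hux : DifferentiableAt ℝ (px u) p := differentiableAt_fderiv_apply hu2 (1, 0)
  have hYxd : DifferentiableAt ℝ (px Y) p := differentiableAt_fderiv_apply hY2 (1, 0)
  have hYtd : DifferentiableAt ℝ (pt Y) p := differentiableAt_fderiv_apply hY2 (0, 1)
  have hb0 : px Y p ≠ 0 := (hYx p hp).ne'
  have hDa : pt (px u) p + deriv f (u p) * px (px u) p
      = -(lam * deriv (deriv f) (u p) * (px u p) ^ 2) := by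
    rw [← px_pt_comm hu2]
    linarith [hE1 p hp]
  have hDb : pt (px Y) p + deriv f (u p) * px (px Y) p
      = -(deriv (deriv f) (u p) * px u p * px Y p) := by
    have hfu : HasFDerivAt (fun q => deriv f (u q))
        (deriv (deriv f) (u p) • fderiv ℝ u p) p :=
      hdf.hasDerivAt.comp_hasFDerivAt p hdu.hasFDerivAt
    have hsum := hYtd.hasFDerivAt.fun_add (hfu.fun_mul hYxd.hasFDerivAt)
    -- The transport equation holds on a neighbourhood of `p`, so it may be differentiated there.
    have hzero : (fun q => pt Y q + deriv f (u q) * px Y q) =ᶠ[nhds p] fun _ => (0 : ℝ) := by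
      filter_upwards [hUn] with q hq using hYchar q hq
    have heq := hzero.fderiv_eq (𝕜 := ℝ)
    rw [hsum.fderiv] at heq
    have happ := congrArg (fun L : ℝ × ℝ →L[ℝ] ℝ => L (1, 0)) heq
    simp at happ
    have hcomm := px_pt_comm hY2
    simp only [px, pt] at happ hcomm ⊢
    linarith
  have hpos : 0 < 1 + (px u p) ^ 2 := by positivity
  have main : pt (fun q => (1 + (px u q) ^ 2) ^ (1/(2*lam)) / px Y q) p
          + deriv f (u p) * px (fun q => (1 + (px u q) ^ 2) ^ (1/(2*lam)) / px Y q) p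
        = deriv (deriv f) (u p) * ((1 + (px u p) ^ 2) ^ (1/(2*lam)) / px Y p) * px u p
            / (1 + (px u p) ^ 2) := by
    have ht : pt (fun q => (1 + (px u q) ^ 2) ^ (1/(2*lam)) / px Y q) p = _ :=
      fderiv_xi (1/(2*lam)) hux hYxd hb0 (0, 1)
    have hx : px (fun q => (1 + (px u q) ^ 2) ^ (1/(2*lam)) / px Y q) p = _ :=
      fderiv_xi (1/(2*lam)) hux hYxd hb0 (1, 0)
    rw [ht, hx]
    change _ * (2 * (1/(2*lam)) * px u p * pt (px u) p / _ - pt (px Y) p / _)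
      + _ * (_ * (2 * (1/(2*lam)) * px u p * px (px u) p / _ - px (px Y) p / _)) = _
    rw [eq_sub_of_add_eq hDa, eq_sub_of_add_eq hDb]
    generalize (1 + (px u p) ^ 2) ^ (1/(2*lam)) = E
    field_simp
    ring
  refine ⟨main, main.trans ?_⟩
  have hsin : sin (2 * arctan (px u p)) = 2 * px u p / (1 + (px u p) ^ 2) := by
    have hs : √(1 + (px u p) ^ 2) ^ 2 = 1 + (px u p) ^ 2 := Real.sq_sqrt hpos.le
    have hs0 : √(1 + (px u p) ^ 2) ≠ 0 := (Real.sqrt_pos.2 hpos).ne'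
    rw [Real.sin_two_mul, Real.sin_arctan, Real.cos_arctan]
    field_simp
    rw [hs]
  rw [hsin]
  ring
end

section
/- Let λ > 0 and let f : ℝ → ℝ be C². Suppose (u, v, ξ) are C¹ functions on an open subset of ℝ² (with coordinates (Y,T)) satisfying the semi-linear system u_Y = (1/2) ξ sin v (cos²(v/2))^{1/(2λ)−1}, v_T = −2λ f''(u) sin²(v/2), ξ_T = (1/2) f''(u) ξ sin v. Then ∂_T [ ξ (cos²(v/2))^{1/(2λ)} ] = ∂_Y [ f'(u) ] pointwise (both sides equal f''(u) u_Y); that is, the 1-form defining the inverse coordinate change x_Y = ξ (cos²(v/2))^{1/(2λ)}, x_T = f'(u) is closed. -/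
open Real

/-- Partial derivative in the `Y` direction (first coordinate). -/
noncomputable def pY (φ : ℝ × ℝ → ℝ) (p : ℝ × ℝ) : ℝ := fderiv ℝ φ p (1, 0)

/-- Partial derivative in the `T` direction (second coordinate). -/
noncomputable def pT (φ : ℝ × ℝ → ℝ) (p : ℝ × ℝ) : ℝ := fderiv ℝ φ p (0, 1)

/-!
Write `a = 1/(2λ) > 0`. The identity `∂_Y[f'(u)] = f''(u) u_Y` is the chain rule, so the point is
`∂_T[ξ (cos²(v/2))^a] = f''(u) u_Y`.

Where `cos (v/2) ≠ 0` the power is smooth and the product and chain rules, with the equations for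
`v_T` and `ξ_T` and `sin v = 2 sin(v/2) cos(v/2)`, give the claim
(`pT_mul_rpow_of_cos_ne_zero`).

Where `cos (v/2) = 0` one has `sin v = 0`, hence `u_Y = 0`, and the power need not be
differentiable. There `fderiv_mul_eq_zero` applies: for `ξ` differentiable and `h ≥ 0` continuous
with `h p = 0`, the (Fréchet, zero if nonexistent) derivative of `ξ h` at `p` vanishes, because
either `ξ p ≠ 0` and `ξ h` has a local extremum at `p`, or `ξ p = 0` and `ξ h = o(‖q - p‖)`.
-/

/-- If `ξ` is differentiable at `p` and `h ≥ 0` is continuous at `p` with `h p = 0`, then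
`fderiv (ξ h) p = 0`. When `ξ p ≠ 0` the product may fail to be differentiable, and `fderiv` is then
zero by convention; if it is differentiable, `p` being a local extremum forces the derivative to
vanish. -/
theorem fderiv_mul_eq_zero {E : Type*} [NormedAddCommGroup E] [NormedSpace ℝ E]
    {ξ h : E → ℝ} {p : E} (hξ : DifferentiableAt ℝ ξ p)
    (hh : ContinuousAt h p) (h0 : ∀ q, 0 ≤ h q) (hp : h p = 0) :
    fderiv ℝ (fun q => ξ q * h q) p = 0 := by
  rcases lt_trichotomy (ξ p) 0 with hneg | hzero | hpos
  · apply IsLocalMax.fderiv_eq_zero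
    filter_upwards [hξ.continuousAt.eventually_lt continuousAt_const hneg] with q hq
    rw [hp, mul_zero]
    exact mul_nonpos_of_nonpos_of_nonneg hq.le (h0 q)
  · apply HasFDerivAt.fderiv
    have hO : (fun q => ξ q) =O[nhds p] fun q => q - p := by
      simpa [hzero] using hξ.hasFDerivAt.isBigO_sub
    have ho : h =o[nhds p] fun _ => (1 : ℝ) := by
      rw [Asymptotics.isLittleO_one_iff]
      simpa [hp] using hh.tendsto
    have hmul : (fun q => ξ q * h q) =o[nhds p] fun q => ‖q - p‖ * (1 : ℝ) :=
      hO.norm_right.mul_isLittleO ho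
    rw [hasFDerivAt_iff_isLittleO]
    simpa [hp] using hmul
  · apply IsLocalMin.fderiv_eq_zero
    filter_upwards [continuousAt_const.eventually_lt hξ.continuousAt hpos] with q hq
    rw [hp, mul_zero]
    exact mul_nonneg hq.le (h0 q)

theorem pT_mul_rpow_of_cos_ne_zero {v ξ : ℝ × ℝ → ℝ} {p : ℝ × ℝ} (a : ℝ)
    (hv : DifferentiableAt ℝ v p) (hξ : DifferentiableAt ℝ ξ p) (hc : cos (v p / 2) ≠ 0) :
    pT (fun q => ξ q * (cos (v q / 2) ^ 2) ^ a) p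
      = (cos (v p / 2) ^ 2) ^ (a - 1) *
        (pT ξ p * cos (v p / 2) ^ 2 - a * ξ p * cos (v p / 2) * sin (v p / 2) * pT v p) := by
  have hc2 : cos (v p / 2) ^ 2 ≠ 0 := pow_ne_zero 2 hc
  have hd : HasDerivAt (fun y : ℝ => (cos (y / 2) ^ 2) ^ a)
      (-(cos (v p / 2) * sin (v p / 2)) * a * (cos (v p / 2) ^ 2) ^ (a - 1)) (v p) := by
    have hcos : HasDerivAt (fun y : ℝ => cos (y / 2) ^ 2)
        (-(cos (v p / 2) * sin (v p / 2))) (v p) := by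
      refine ((((hasDerivAt_id' (v p)).div_const 2).cos).fun_pow 2).congr_deriv ?_
      push_cast
      ring
    exact hcos.rpow_const (Or.inl hc2)
  have h := hξ.hasFDerivAt.mul (hd.comp_hasFDerivAt p hv.hasFDerivAt)
  have hpow : (cos (v p / 2) ^ 2) ^ a
      = (cos (v p / 2) ^ 2) ^ (a - 1) * cos (v p / 2) ^ 2 := by
    rw [Real.rpow_sub_one hc2, div_mul_cancel₀ _ hc2]
  have h' : fderiv ℝ (fun q => ξ q * (cos (v q / 2) ^ 2) ^ a) p = _ := h.fderiv
  unfold pT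
  rw [h']
  simp only [add_apply, smul_apply, smul_eq_mul,
    Function.comp_apply]
  rw [hpow]
  ring

/-- for `C¹` solutions `(u,v,ξ)` of the semi-linear system
`u_Y = (1/2) ξ sin v (cos²(v/2))^{1/(2λ)−1}`, `v_T = −2λ f''(u) sin²(v/2)`,
`ξ_T = (1/2) f''(u) ξ sin v`, one has
`∂_T[ξ (cos²(v/2))^{1/(2λ)}] = ∂_Y[f'(u)]`, both sides being `f''(u) u_Y`;
i.e. the 1-form defining `x_Y = ξ (cos²(v/2))^{1/(2λ)}`, `x_T = f'(u)` is closed. -/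
theorem stmt8 (lam : ℝ) (hlam : 0 < lam) (f : ℝ → ℝ) (hf : ContDiff ℝ 2 f)
    (U : Set (ℝ × ℝ)) (hU : IsOpen U) (u v ξ : ℝ × ℝ → ℝ)
    (hu : ContDiffOn ℝ 1 u U) (hv : ContDiffOn ℝ 1 v U) (hξ : ContDiffOn ℝ 1 ξ U)
    (h1 : ∀ p ∈ U,
      pY u p = (1/2) * ξ p * sin (v p) * (cos (v p / 2) ^ 2) ^ (1/(2*lam) - 1))
    (h2 : ∀ p ∈ U,
      pT v p = -2 * lam * deriv (deriv f) (u p) * sin (v p / 2) ^ 2)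
    (h3 : ∀ p ∈ U,
      pT ξ p = (1/2) * deriv (deriv f) (u p) * ξ p * sin (v p)) :
    ∀ p ∈ U,
      pT (fun q => ξ q * (cos (v q / 2) ^ 2) ^ (1/(2*lam))) p
          = pY (fun q => deriv f (u q)) p ∧
      pT (fun q => ξ q * (cos (v q / 2) ^ 2) ^ (1/(2*lam))) p
          = deriv (deriv f) (u p) * pY u p := by
  intro p hp
  have hUp : U ∈ nhds p := hU.mem_nhds hp
  have hud : DifferentiableAt ℝ u p := (hu.contDiffAt hUp).differentiableAt (by norm_num)
  have hvd : DifferentiableAt ℝ v p := (hv.contDiffAt hUp).differentiableAt (by norm_num)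
  have hξd : DifferentiableAt ℝ ξ p := (hξ.contDiffAt hUp).differentiableAt (by norm_num)
  have hY : pY (fun q => deriv f (u q)) p = deriv (deriv f) (u p) * pY u p := by
    have hf' : ContDiff ℝ 1 (deriv f) := ((contDiff_succ_iff_deriv (n := 1)).1 hf).2.2
    have hfd : HasDerivAt (deriv f) (deriv (deriv f) (u p)) (u p) :=
      (hf'.differentiable (by norm_num) _).hasDerivAt
    have h : fderiv ℝ (fun q => deriv f (u q)) p = _ :=
      (hfd.comp_hasFDerivAt p hud.hasFDerivAt).fderiv
    simp [pY, h]
  have hsin : sin (v p) = 2 * sin (v p / 2) * cos (v p / 2) := by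
    rw [← sin_two_mul]
    congr 1
    ring
  have hT : pT (fun q => ξ q * (cos (v q / 2) ^ 2) ^ (1/(2*lam))) p
      = deriv (deriv f) (u p) * pY u p := by
    by_cases hc : cos (v p / 2) = 0
    · have ha : 0 < 1 / (2 * lam) := by positivity
      have hcont : ContinuousAt (fun q => (cos (v q / 2) ^ 2) ^ (1/(2*lam))) p := by
        apply ContinuousAt.rpow_const
        · have := hvd.continuousAt
          fun_prop
        · exact Or.inr ha.le
      have h0 := fderiv_mul_eq_zero hξd hcont (fun q => by positivity)
        (by simp only [hc]; rw [zero_pow two_ne_zero, Real.zero_rpow ha.ne'])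
      rw [h1 p hp, hsin, hc, pT, h0]
      simp
    · rw [pT_mul_rpow_of_cos_ne_zero _ hvd hξd hc, h1 p hp, h2 p hp, h3 p hp, hsin]
      have hl : 1 / (2 * lam) * (2 * lam) = 1 := by field_simp
      generalize (cos (v p / 2) ^ 2) ^ (1 / (2 * lam) - 1) = P
      have hcs := sin_sq_add_cos_sq (v p / 2)
      generalize 1 / (2 * lam) = a at *
      linear_combination
        P * deriv (deriv f) (u p) * ξ p * cos (v p / 2) * sin (v p / 2) * hcs
        + P * deriv (deriv f) (u p) * ξ p * cos (v p / 2) * sin (v p / 2) ^ 3 * hl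
  exact ⟨hT.trans hY.symm, hT⟩
end

section
/- Let λ ∈ (0, 1/2] and let x, u, v, ξ : [Y₁, Y₂] → ℝ be differentiable functions with ξ(Y) > 0 for all Y, x'(Y) = ξ(Y) (cos²(v(Y)/2))^{1/(2λ)}, and u'(Y) = (1/2) ξ(Y) sin(v(Y)) (cos²(v(Y)/2))^{1/(2λ)−1} for all Y ∈ [Y₁, Y₂]. If x(Y₁) = x(Y₂), then u is constant on [Y₁, Y₂]; in particular u(Y₁) = u(Y₂). (Indeed x' ≥ 0 and x(Y₁) = x(Y₂) force x' ≡ 0, hence cos(v/2) ≡ 0 since ξ > 0, hence sin v = 2 sin(v/2) cos(v/2) ≡ 0 and u' ≡ 0.) -/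
/-!
Since `x' ≥ 0`, `x` is monotone, so equal endpoint values make it constant on `[Y₁, Y₂]` and
`x' ≡ 0`. As `ξ > 0`, this forces `cos (v/2) ≡ 0`, hence `sin v = 2 sin (v/2) cos (v/2) ≡ 0`,
hence `u' ≡ 0` and `u` is constant.
-/

open Real Set

/-- if `ξ > 0`, `x' = ξ (cos²(v/2))^{1/(2λ)}`,
`u' = (1/2) ξ sin v (cos²(v/2))^{1/(2λ)−1}` on `[Y₁,Y₂]` and `x(Y₁) = x(Y₂)`,
then `u` is constant on `[Y₁,Y₂]`; in particular `u(Y₁) = u(Y₂)`. -/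
theorem stmt9 (lam : ℝ) (hlam : 0 < lam ∧ lam ≤ 1/2)
    (Y₁ Y₂ : ℝ) (hY : Y₁ ≤ Y₂) (x u v ξ : ℝ → ℝ)
    (hv : DifferentiableOn ℝ v (Icc Y₁ Y₂))
    (hξdiff : DifferentiableOn ℝ ξ (Icc Y₁ Y₂))
    (hξ : ∀ Y ∈ Icc Y₁ Y₂, 0 < ξ Y)
    (hx : ∀ Y ∈ Icc Y₁ Y₂,
      HasDerivWithinAt x (ξ Y * (cos (v Y / 2) ^ 2) ^ (1/(2*lam))) (Icc Y₁ Y₂) Y)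
    (hu : ∀ Y ∈ Icc Y₁ Y₂,
      HasDerivWithinAt u
        ((1/2) * ξ Y * sin (v Y) * (cos (v Y / 2) ^ 2) ^ (1/(2*lam) - 1)) (Icc Y₁ Y₂) Y)
    (hend : x Y₁ = x Y₂) :
    (∀ Y ∈ Icc Y₁ Y₂, u Y = u Y₁) ∧ u Y₁ = u Y₂ := by
  rcases hY.eq_or_lt with rfl | hlt
  · simp
  have hmono : MonotoneOn x (Icc Y₁ Y₂) := by
    refine monotoneOn_of_hasDerivWithinAt_nonneg (convex_Icc _ _)
      (fun Y hmem => (hx Y hmem).continuousWithinAt)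
      (fun Y hmem => (hx Y (interior_subset hmem)).mono interior_subset) (fun Y hmem => ?_)
    exact mul_nonneg (hξ Y (interior_subset hmem)).le (rpow_nonneg (sq_nonneg _) _)
  have hconst : ∀ Y ∈ Icc Y₁ Y₂, x Y = x Y₁ := fun Y hmem =>
    le_antisymm ((hmono hmem (right_mem_Icc.2 hY) hmem.2).trans hend.ge)
      (hmono (left_mem_Icc.2 hY) hmem hmem.1)
  have hsin : ∀ Y ∈ Icc Y₁ Y₂, sin (v Y) = 0 := by
    intro Y hmem
    -- one-sided derivatives at the endpoints are unique because `Y₁ < Y₂`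
    have h0 : ξ Y * (cos (v Y / 2) ^ 2) ^ (1/(2*lam)) = 0 :=
      (uniqueDiffOn_Icc hlt Y hmem).eq_deriv _ (hx Y hmem)
        ((hasDerivWithinAt_const Y _ (x Y₁)).congr hconst (hconst Y hmem))
    have h1 := (mul_eq_zero.1 h0).resolve_left (hξ Y hmem).ne'
    have h2 : cos (v Y / 2) = 0 :=
      pow_eq_zero_iff two_ne_zero |>.1 ((rpow_eq_zero_iff_of_nonneg (sq_nonneg _)).1 h1).1
    have h3 := sin_two_mul (v Y / 2)
    rwa [mul_div_cancel₀ _ two_ne_zero, h2, mul_zero] at h3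
  have hu0 : ∀ Y ∈ Icc Y₁ Y₂, HasDerivWithinAt u 0 (Icc Y₁ Y₂) Y := by
    intro Y hmem
    -- only `sin v = 0` is used: for `λ = 1/2` the power of `cos²` has exponent `0` and equals `1`
    simpa [hsin Y hmem] using hu Y hmem
  have huc : ∀ Y ∈ Icc Y₁ Y₂, u Y = u Y₁ :=
    constant_of_derivWithin_zero (fun Y hmem => (hu0 Y hmem).differentiableWithinAt)
      (fun Y hmem => (hu0 Y (Ico_subset_Icc_self hmem)).derivWithin
        (uniqueDiffOn_Icc hlt Y (Ico_subset_Icc_self hmem)))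
  exact ⟨huc, (huc Y₂ (right_mem_Icc.2 hY)).symm⟩
end

section
/- Let M ≥ 0, r > 0, and let ξ : [0, r] → ℝ be differentiable with ξ(0) = 1 and ξ'(T) = (1/2) g(T) ξ(T) sin(v(T)) for all T ∈ [0, r], where g, v : [0, r] → ℝ are functions with |g(T)| ≤ M for all T. Then e^{−MT/2} ≤ ξ(T) ≤ e^{MT/2} for all T ∈ [0, r]; in particular ξ(T) > 0 and ξ(T) ≤ e^{Mr/2}. -/
/-!
The square `ξ²` satisfies `(ξ²)' = (g sin v) ξ²` with `|g sin v| ≤ M`, and it is nonnegative without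
knowing the sign of `ξ`. Hence `ξ² e^{MT}` is nondecreasing and `ξ² e^{-MT}` is nonincreasing, so
`e^{-MT} ≤ ξ² ≤ e^{MT}`. In particular `ξ` has no zero, so by the intermediate value theorem it
keeps the sign of `ξ(0) = 1`, and taking square roots gives the bounds on `ξ`.
-/

open Real Set

/-- a priori exponential bounds on `ξ` with `ξ(0) = 1` and
`ξ' = (1/2) g ξ sin v`, `|g| ≤ M`, on `[0,r]`:
`e^{−MT/2} ≤ ξ(T) ≤ e^{MT/2}`; in particular `ξ(T) > 0` and `ξ(T) ≤ e^{Mr/2}`. -/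
theorem stmt12 (M r : ℝ) (hM : 0 ≤ M) (hr : 0 < r)
    (ξ g v : ℝ → ℝ) (hξ0 : ξ 0 = 1)
    (hg : ∀ T ∈ Icc (0:ℝ) r, |g T| ≤ M)
    (hξ : ∀ T ∈ Icc (0:ℝ) r,
      HasDerivWithinAt ξ ((1/2) * g T * ξ T * sin (v T)) (Icc (0:ℝ) r) T) :
    ∀ T ∈ Icc (0:ℝ) r,
      exp (-(M * T) / 2) ≤ ξ T ∧ ξ T ≤ exp (M * T / 2) ∧
      0 < ξ T ∧ ξ T ≤ exp (M * r / 2) := by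
  have hcoef : ∀ T ∈ Icc (0:ℝ) r, |g T * sin (v T)| ≤ M := by
    intro T hT
    rw [abs_mul]
    calc |g T| * |sin (v T)| ≤ M * 1 :=
          mul_le_mul (hg T hT) (abs_sin_le_one _) (abs_nonneg _) hM
      _ = M := mul_one M
  have hderiv : ∀ c : ℝ, ∀ T ∈ Icc (0:ℝ) r,
      HasDerivWithinAt (fun t => ξ t ^ 2 * exp (c * t))
        ((ξ T ^ 2 * exp (c * T)) * (g T * sin (v T) + c)) (Icc (0:ℝ) r) T := by
    intro c T hT
    have he : HasDerivWithinAt (fun t => exp (c * t)) (exp (c * T) * (c * 1)) (Icc (0:ℝ) r) T :=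
      (((hasDerivAt_id T).const_mul c).exp).hasDerivWithinAt
    refine (((hξ T hT).fun_pow 2).fun_mul he).congr_deriv ?_
    push_cast
    ring
  have hmono : MonotoneOn (fun t => ξ t ^ 2 * exp (M * t)) (Icc (0:ℝ) r) := by
    refine monotoneOn_of_hasDerivWithinAt_nonneg (convex_Icc 0 r)
      (fun T hT => (hderiv M T hT).continuousWithinAt)
      (fun T hT => (hderiv M T (interior_subset hT)).mono interior_subset) (fun T hT => ?_)
    have := (abs_le.1 (hcoef T (interior_subset hT))).1
    exact mul_nonneg (by positivity) (by linarith)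
  have hanti : AntitoneOn (fun t => ξ t ^ 2 * exp (-M * t)) (Icc (0:ℝ) r) := by
    refine antitoneOn_of_hasDerivWithinAt_nonpos (convex_Icc 0 r)
      (fun T hT => (hderiv (-M) T hT).continuousWithinAt)
      (fun T hT => (hderiv (-M) T (interior_subset hT)).mono interior_subset) (fun T hT => ?_)
    have := (abs_le.1 (hcoef T (interior_subset hT))).2
    exact mul_nonpos_of_nonneg_of_nonpos (by positivity) (by linarith)
  have h0 : (0:ℝ) ∈ Icc (0:ℝ) r := ⟨le_rfl, hr.le⟩
  have hlow : ∀ T ∈ Icc (0:ℝ) r, 1 ≤ ξ T ^ 2 * exp (M * T) := by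
    intro T hT
    simpa [hξ0] using hmono h0 hT hT.1
  have hpos : ∀ T ∈ Icc (0:ℝ) r, 0 < ξ T := by
    intro T hT
    by_contra! hneg
    have hcont : ContinuousOn ξ (Icc 0 T) := fun t ht =>
      ((hξ t ⟨ht.1, ht.2.trans hT.2⟩).continuousWithinAt).mono (Icc_subset_Icc_right hT.2)
    obtain ⟨s, hs, hs0⟩ := intermediate_value_Icc' hT.1 hcont
      (show (0:ℝ) ∈ Icc (ξ T) (ξ 0) from ⟨hneg, by rw [hξ0]; exact zero_le_one⟩)
    have := hlow s ⟨hs.1, hs.2.trans hT.2⟩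
    norm_num [hs0] at this
  intro T hT
  have hp := hpos T hT
  have hupper : ξ T ≤ exp (M * T / 2) := by
    refine (sq_le_sq₀ hp.le (exp_pos _).le).1 ?_
    have h1 : ξ T ^ 2 * exp (-M * T) ≤ 1 := by simpa [hξ0] using hanti h0 hT hT.1
    calc ξ T ^ 2 = (ξ T ^ 2 * exp (-M * T)) * exp (M * T) := by
          rw [mul_assoc, ← exp_add]; simp
      _ ≤ 1 * exp (M * T) := by gcongr
      _ = exp (M * T / 2) ^ 2 := by rw [← exp_nat_mul, one_mul]; congr 1; push_cast; ring
  refine ⟨?_, hupper, hp, hupper.trans (exp_le_exp.2 ?_)⟩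
  · refine (sq_le_sq₀ (exp_pos _).le hp.le).1 ?_
    calc exp (-(M * T) / 2) ^ 2 = 1 * exp (-(M * T)) := by
          rw [← exp_nat_mul, one_mul]; congr 1; push_cast; ring
      _ ≤ (ξ T ^ 2 * exp (M * T)) * exp (-(M * T)) := by gcongr; exact hlow T hT
      _ = ξ T ^ 2 := by rw [mul_assoc, ← exp_add]; simp
  · have := mul_le_mul_of_nonneg_left hT.2 hM
    linarith
end

section
/- Let λ ∈ ℝ, let c : ℝ → ℝ be C¹ with c(u) > 0 for all u, and let u be a C² function on an open subset of ℝ² satisfying equation (E2): u_{tt} − c(u)² u_{xx} − 2λ c(u) c'(u) (u_x)² = 0. Define R := u_t + c(u) u_x, S := u_t − c(u) u_x, w := 2 arctan R, v := 2 arctan S. Then pointwise: w_t − c(u) w_x = (c'(u)/c(u)) · (1/(1+R²)) · [ λ R² + (λ−1) S² − (2λ−1) R S ] and v_t + c(u) v_x = (c'(u)/c(u)) · (1/(1+S²)) · [ λ S² + (λ−1) R² − (2λ−1) R S ]. -/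
/-!
Differentiating `R = u_t + c(u) u_x` along `∂_t - c(u) ∂_x`, the mixed derivatives `c u_{xt}` and
`c u_{tx}` cancel by symmetry of the second derivative, and (E2) replaces `u_{tt} - c² u_{xx}`:
`R_t - c R_x = (2λ - 1) c c' u_x² + c' u_t u_x`. With `u_t = (R + S)/2` and `c u_x = (R - S)/2`
this is `c'/(2c)` times the bracket in the claim, and `2 arctan` contributes the factor
`2/(1 + R²)`. The equation for `S` is the same computation with `c` replaced by `-c`
(`fderiv_angle` carries a sign `s = ±1` to cover both cases).
-/

open Real

/-- Chain and product rule for `2 arctan (u_t + s c(u) u_x)`; `s = 1` gives `w` and `s = -1`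
gives `v`. -/
lemma fderiv_angle (s : ℝ) (c : ℝ → ℝ) (u : ℝ × ℝ → ℝ) (p e : ℝ × ℝ)
    (hc : DifferentiableAt ℝ c (u p)) (hu : DifferentiableAt ℝ u p)
    (hx : DifferentiableAt ℝ (px u) p) (ht : DifferentiableAt ℝ (pt u) p) :
    fderiv ℝ (fun q => 2 * arctan (pt u q + s * (c (u q) * px u q))) p e
      = 2 * (1 / (1 + (pt u p + s * (c (u p) * px u p)) ^ 2)) *
        (fderiv ℝ (pt u) p e + s * (c (u p) * fderiv ℝ (px u) p e
          + deriv c (u p) * fderiv ℝ u p e * px u p)) := by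
  have hcu : HasFDerivAt (fun q => c (u q)) (deriv c (u p) • fderiv ℝ u p) p :=
    hc.hasDerivAt.comp_hasFDerivAt p hu.hasFDerivAt
  have h := (((ht.hasFDerivAt.add
    ((hcu.mul hx.hasFDerivAt).const_mul s)).arctan).const_mul 2).fderiv
  refine (DFunLike.congr_fun h e).trans ?_
  simp
  ring

/-- For a `C²` function on an open set, both first partial derivatives are differentiable and
`u_{xt} = u_{tx}`. -/
lemma second_partials {U : Set (ℝ × ℝ)} (hU : IsOpen U) {u : ℝ × ℝ → ℝ}
    (hu : ContDiffOn ℝ 2 u U) {p : ℝ × ℝ} (hp : p ∈ U) :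
    DifferentiableAt ℝ (px u) p ∧ DifferentiableAt ℝ (pt u) p ∧ pt (px u) p = px (pt u) p := by
  have hup : ContDiffAt ℝ 2 u p := hu.contDiffAt (hU.mem_nhds hp)
  have hd : DifferentiableAt ℝ (fderiv ℝ u) p :=
    (hup.fderiv_right (m := 1) (by norm_num)).differentiableAt (by norm_num)
  have hdir : ∀ e : ℝ × ℝ, HasFDerivAt (fun q => fderiv ℝ u q e)
      ((fderiv ℝ (fderiv ℝ u) p).flip e) p := fun e => by
    simpa using hd.hasFDerivAt.clm_apply (hasFDerivAt_const e p)
  have hsymm : IsSymmSndFDerivAt ℝ u p := hup.isSymmSndFDerivAt (by simp)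
  refine ⟨(hdir (1, 0)).differentiableAt, (hdir (0, 1)).differentiableAt, ?_⟩
  have h1 : pt (px u) p = fderiv ℝ (fderiv ℝ u) p (0, 1) (1, 0) :=
    DFunLike.congr_fun (hdir (1, 0)).fderiv (0, 1)
  have h2 : px (pt u) p = fderiv ℝ (fderiv ℝ u) p (1, 0) (0, 1) :=
    DFunLike.congr_fun (hdir (0, 1)).fderiv (1, 0)
  rw [h1, h2]
  exact hsymm (0, 1) (1, 0)

/-- for a `C²` solution `u` of (E2)
`u_{tt} − c(u)² u_{xx} − 2λ c(u) c'(u) (u_x)² = 0`, the angle variables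
`w := 2 arctan R`, `v := 2 arctan S` (with `R = u_t + c(u)u_x`, `S = u_t − c(u)u_x`)
satisfy
`w_t − c(u) w_x = (c'/c) (1/(1+R²)) [λR² + (λ−1)S² − (2λ−1)RS]` and
`v_t + c(u) v_x = (c'/c) (1/(1+S²)) [λS² + (λ−1)R² − (2λ−1)RS]`. -/
theorem stmt14 (lam : ℝ) (c : ℝ → ℝ) (hc : ContDiff ℝ 1 c) (hcpos : ∀ z : ℝ, 0 < c z)
    (U : Set (ℝ × ℝ)) (hU : IsOpen U) (u : ℝ × ℝ → ℝ)
    (hu : ContDiffOn ℝ 2 u U)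
    (hE2 : ∀ p ∈ U,
      pt (pt u) p - (c (u p)) ^ 2 * px (px u) p
        - 2 * lam * c (u p) * deriv c (u p) * (px u p) ^ 2 = 0) :
    ∀ p ∈ U,
      (pt (fun q => 2 * arctan (pt u q + c (u q) * px u q)) p
          - c (u p) * px (fun q => 2 * arctan (pt u q + c (u q) * px u q)) p
        = (deriv c (u p) / c (u p)) * (1 / (1 + (pt u p + c (u p) * px u p) ^ 2)) *
            (lam * (pt u p + c (u p) * px u p) ^ 2
              + (lam - 1) * (pt u p - c (u p) * px u p) ^ 2
              - (2 * lam - 1) * (pt u p + c (u p) * px u p)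
                  * (pt u p - c (u p) * px u p))) ∧
      (pt (fun q => 2 * arctan (pt u q - c (u q) * px u q)) p
          + c (u p) * px (fun q => 2 * arctan (pt u q - c (u q) * px u q)) p
        = (deriv c (u p) / c (u p)) * (1 / (1 + (pt u p - c (u p) * px u p) ^ 2)) *
            (lam * (pt u p - c (u p) * px u p) ^ 2
              + (lam - 1) * (pt u p + c (u p) * px u p) ^ 2
              - (2 * lam - 1) * (pt u p + c (u p) * px u p)
                  * (pt u p - c (u p) * px u p))) := by
  intro p hp
  obtain ⟨hx, ht, hmix⟩ := second_partials hU hu hp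
  have hup : DifferentiableAt ℝ u p :=
    (hu.contDiffAt (hU.mem_nhds hp)).differentiableAt (by norm_num)
  have hcp : DifferentiableAt ℝ c (u p) := (hc.differentiable (by norm_num)) (u p)
  have hE := hE2 p hp
  have hc0 : c (u p) ≠ 0 := (hcpos (u p)).ne'
  have hW := fun e => fderiv_angle 1 c u p e hcp hup hx ht
  have hV := fun e => fderiv_angle (-1) c u p e hcp hup hx ht
  simp only [one_mul, neg_one_mul, ← sub_eq_add_neg] at hW hV
  have hutt : pt (pt u) p = (c (u p)) ^ 2 * px (px u) p
      + 2 * lam * c (u p) * deriv c (u p) * (px u p) ^ 2 := by linarith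
  constructor
  · have h1 := hW (0, 1)
    have h2 := hW (1, 0)
    simp only [← px.eq_def, ← pt.eq_def] at h1 h2
    rw [h1, h2, hmix, hutt]
    have hR : 1 + (pt u p + c (u p) * px u p) ^ 2 ≠ 0 := by positivity
    field_simp
    ring
  · have h1 := hV (0, 1)
    have h2 := hV (1, 0)
    simp only [← px.eq_def, ← pt.eq_def] at h1 h2
    rw [h1, h2, hmix, hutt]
    have hS : 1 + (pt u p - c (u p) * px u p) ^ 2 ≠ 0 := by positivity
    field_simp
    ring
end

section
/- Let λ > 0, let c : ℝ → ℝ be C¹ with c(u) > 0, and let u be a C³ function on an open subset U of ℝ² satisfying equation (E2): u_{tt} − c(u)² u_{xx} − 2λ c(u) c'(u) (u_x)² = 0. Let Y be a C² function on U with Y_t + c(u) Y_x = 0 and Y_x < 0 on U. Define R := u_t + c(u) u_x, S := u_t − c(u) u_x, and q := (1 + S²)^{1/(2λ)} / (−Y_x). Then pointwise: q_t + c(u) q_x = −(c'(u)/(2 c(u))) · ((1 + S²)^{1/(2λ)−1} / (−Y_x)) · [ ((λ−1)/λ) R S² − ((λ−1)/λ) R² S − R + S ]. -/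
/-!
Write `D = ∂_t + c(u) ∂_x` for the derivative along forward characteristics. Everything follows
from two transport identities.

* Differentiating `S = u_t - c(u) u_x` and using the symmetry of the second derivatives of `u`,
  `D S = u_tt - c² u_xx - c' u_x (u_t + c u_x)`, so (E2) gives `D S = c' u_x (2λ c u_x - R)`.
* Differentiating `Y_t + c(u) Y_x = 0` in `x` and using the symmetry of the second derivatives
  of `Y` gives `D Y_x = -c' u_x Y_x`.

The quotient and chain rules then express `D q` through `D S` and `D Y_x`. After
eliminating `u_t = S + c u_x`, the claimed formula is an identity of rational functions, with
`(1 + S²) ^ (1/(2λ) - 1)` as a common factor.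
-/

open Real

lemma differentiableAt_px {φ : ℝ × ℝ → ℝ} {z : ℝ × ℝ} (h : ContDiffAt ℝ 2 φ z) :
    DifferentiableAt ℝ (px φ) z :=
  ((h.fderiv_right (m := 1) (by norm_num)).differentiableAt (by norm_num)).clm_apply
    (differentiableAt_const _)

lemma differentiableAt_pt {φ : ℝ × ℝ → ℝ} {z : ℝ × ℝ} (h : ContDiffAt ℝ 2 φ z) :
    DifferentiableAt ℝ (pt φ) z :=
  ((h.fderiv_right (m := 1) (by norm_num)).differentiableAt (by norm_num)).clm_apply
    (differentiableAt_const _)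

lemma pt_px_comm {φ : ℝ × ℝ → ℝ} {z : ℝ × ℝ} (h : ContDiffAt ℝ 2 φ z) :
    pt (px φ) z = px (pt φ) z := by
  have hd : DifferentiableAt ℝ (fderiv ℝ φ) z :=
    (h.fderiv_right (m := 1) (by norm_num)).differentiableAt (by norm_num)
  have key : ∀ v w : ℝ × ℝ,
      fderiv ℝ (fun p => fderiv ℝ φ p v) z w = fderiv ℝ (fderiv ℝ φ) z w v := by
    intro v w
    rw [fderiv_clm_apply hd (differentiableAt_const _)]
    simp
  have hs : IsSymmSndFDerivAt ℝ φ z := h.isSymmSndFDerivAt (by simp)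
  change fderiv ℝ (fun p => fderiv ℝ φ p (1, 0)) z (0, 1)
    = fderiv ℝ (fun p => fderiv ℝ φ p (0, 1)) z (1, 0)
  rw [key, key]
  exact hs _ _

/-- The derivative of `(1 + f²) ^ a / (-g)` in an arbitrary direction `v`. -/
lemma fderiv_rpow_div {f g : ℝ × ℝ → ℝ} {z : ℝ × ℝ} (a : ℝ) (hf : DifferentiableAt ℝ f z)
    (hg : DifferentiableAt ℝ g z) (hg0 : g z ≠ 0) (v : ℝ × ℝ) :
    fderiv ℝ (fun p => (1 + f p ^ 2) ^ a / (-g p)) z v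
      = a * (1 + f z ^ 2) ^ (a - 1) * (2 * f z * fderiv ℝ f z v) / (-g z)
        + (1 + f z ^ 2) ^ a * fderiv ℝ g z v / g z ^ 2 := by
  have hpos : (1 + f z ^ 2) ≠ 0 := by positivity
  have h1 : HasFDerivAt (fun p => 1 + f p ^ 2) ((2 * f z) • fderiv ℝ f z) z := by
    simpa using (hf.hasFDerivAt.pow 2).const_add 1
  have h2 := h1.rpow_const (p := a) (Or.inl hpos)
  have h3 : HasFDerivAt (fun p => (-g p)⁻¹) _ z :=
    (hasDerivAt_inv (neg_ne_zero.2 hg0)).comp_hasFDerivAt z hg.hasFDerivAt.neg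
  have h4 := (h2.mul h3).fderiv
  simp only [div_eq_mul_inv]
  change fderiv ℝ (fun p => (1 + f p ^ 2) ^ a * (-g p)⁻¹) z = _ at h4
  rw [h4]
  simp
  ring

/-- The derivative of `h + c(u) g` in an arbitrary direction `v`. -/
lemma fderiv_add_comp_mul {c : ℝ → ℝ} {u g h : ℝ × ℝ → ℝ} {z : ℝ × ℝ}
    (hc : DifferentiableAt ℝ c (u z)) (hu : DifferentiableAt ℝ u z)
    (hg : DifferentiableAt ℝ g z) (hh : DifferentiableAt ℝ h z) (v : ℝ × ℝ) :
    fderiv ℝ (fun p => h p + c (u p) * g p) z v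
      = fderiv ℝ h z v + (c (u z) * fderiv ℝ g z v
        + deriv c (u z) * fderiv ℝ u z v * g z) := by
  have h1 : HasFDerivAt (fun p => c (u p)) (deriv c (u z) • fderiv ℝ u z) z :=
    hc.hasDerivAt.comp_hasFDerivAt z hu.hasFDerivAt
  have h2 : HasFDerivAt (fun p => h p + c (u p) * g p) _ z :=
    hh.hasFDerivAt.add (h1.mul hg.hasFDerivAt)
  rw [h2.fderiv]
  simp
  ring

/-- let `u` be a `C³` solution of (E2)
`u_{tt} − c(u)² u_{xx} − 2λ c(u) c'(u) (u_x)² = 0`, `Y` a `C²` function with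
`Y_t + c(u) Y_x = 0` and `Y_x < 0`.  With `R := u_t + c(u)u_x`, `S := u_t − c(u)u_x`
and `q := (1+S²)^{1/(2λ)}/(−Y_x)`, one has
`q_t + c(u) q_x = −(c'/(2c)) ((1+S²)^{1/(2λ)−1}/(−Y_x)) [((λ−1)/λ)RS² − ((λ−1)/λ)R²S − R + S]`. -/
theorem stmt17 (lam : ℝ) (hlam : 0 < lam)
    (c : ℝ → ℝ) (hc : ContDiff ℝ 1 c) (hcpos : ∀ z : ℝ, 0 < c z)
    (U : Set (ℝ × ℝ)) (hU : IsOpen U) (u Y : ℝ × ℝ → ℝ)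
    (hu : ContDiffOn ℝ 3 u U) (hY : ContDiffOn ℝ 2 Y U)
    (hE2 : ∀ p ∈ U,
      pt (pt u) p - (c (u p)) ^ 2 * px (px u) p
        - 2 * lam * c (u p) * deriv c (u p) * (px u p) ^ 2 = 0)
    (hYchar : ∀ p ∈ U, pt Y p + c (u p) * px Y p = 0)
    (hYx : ∀ p ∈ U, px Y p < 0) :
    ∀ z ∈ U,
      pt (fun q => (1 + (pt u q - c (u q) * px u q) ^ 2) ^ (1/(2*lam)) / (-px Y q)) z
        + c (u z) * px (fun q =>
            (1 + (pt u q - c (u q) * px u q) ^ 2) ^ (1/(2*lam)) / (-px Y q)) z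
      = -(deriv c (u z) / (2 * c (u z))) *
          ((1 + (pt u z - c (u z) * px u z) ^ 2) ^ (1/(2*lam) - 1) / (-px Y z)) *
          (((lam - 1)/lam) * (pt u z + c (u z) * px u z)
              * (pt u z - c (u z) * px u z) ^ 2
            - ((lam - 1)/lam) * (pt u z + c (u z) * px u z) ^ 2
              * (pt u z - c (u z) * px u z)
            - (pt u z + c (u z) * px u z) + (pt u z - c (u z) * px u z)) := by
  intro z hz
  have hnhds : U ∈ nhds z := hU.mem_nhds hz
  have hu2 : ContDiffAt ℝ 2 u z := (hu.contDiffAt hnhds).of_le (by norm_num)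
  have hY2 : ContDiffAt ℝ 2 Y z := hY.contDiffAt hnhds
  have hcd : DifferentiableAt ℝ c (u z) := hc.differentiable (by norm_num) _
  have hud : DifferentiableAt ℝ u z := hu2.differentiableAt (by norm_num)
  have hux := differentiableAt_px hu2
  have hut := differentiableAt_pt hu2
  have hYxd := differentiableAt_px hY2
  have hYtd := differentiableAt_pt hY2
  have hcz : c (u z) ≠ 0 := (hcpos _).ne'
  have hY0 : px Y z ≠ 0 := (hYx z hz).ne
  -- The transport identity for `Y_x`: the `x`-derivative of `Y_t + c(u) Y_x = 0`.
  have hDY : px (pt Y) z + (c (u z) * px (px Y) z + deriv c (u z) * px u z * px Y z) = 0 := by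
    have h0 : (fun p => pt Y p + c (u p) * px Y p) =ᶠ[nhds z] fun _ => (0 : ℝ) :=
      Filter.eventually_of_mem hnhds hYchar
    have h1 := fderiv_add_comp_mul hcd hud hYxd hYtd (1, 0)
    rw [h0.fderiv_eq] at h1
    rw [fderiv_fun_const] at h1
    exact h1.symm
  rw [← pt_px_comm hY2] at hDY
  set S : ℝ × ℝ → ℝ := fun p => pt u p - c (u p) * px u p with hS
  have hSd : DifferentiableAt ℝ S z := hut.sub ((hcd.comp z hud).mul hux)
  have hSv : ∀ v, fderiv ℝ S z v = fderiv ℝ (pt u) z v - (c (u z) * fderiv ℝ (px u) z v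
      + deriv c (u z) * fderiv ℝ u z v * px u z) := by
    intro v
    have h := fderiv_add_comp_mul (c := fun y => -c y) hcd.neg hud hux hut v
    have e : (fun p => pt u p + -c (u p) * px u p) = S := by
      funext p
      simp only [hS]
      ring
    rw [e, deriv.fun_neg] at h
    rw [h]
    ring
  have hSt : pt S z = pt (pt u) z - (c (u z) * pt (px u) z
      + deriv c (u z) * pt u z * px u z) := hSv (0, 1)
  have hSx : px S z = px (pt u) z - (c (u z) * px (px u) z
      + deriv c (u z) * px u z * px u z) := hSv (1, 0)
  have hDS : pt S z + c (u z) * px S z = deriv c (u z) * px u z *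
      (2 * lam * c (u z) * px u z - (pt u z + c (u z) * px u z)) := by
    rw [hSt, hSx, pt_px_comm hu2]
    linear_combination hE2 z hz
  have hqt : pt (fun p => (1 + S p ^ 2) ^ (1 / (2 * lam)) / (-px Y p)) z
      = 1 / (2 * lam) * (1 + S z ^ 2) ^ (1 / (2 * lam) - 1) * (2 * S z * pt S z) / (-px Y z)
        + (1 + S z ^ 2) ^ (1 / (2 * lam)) * pt (px Y) z / px Y z ^ 2 :=
    fderiv_rpow_div _ hSd hYxd hY0 (0, 1)
  have hqx : px (fun p => (1 + S p ^ 2) ^ (1 / (2 * lam)) / (-px Y p)) z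
      = 1 / (2 * lam) * (1 + S z ^ 2) ^ (1 / (2 * lam) - 1) * (2 * S z * px S z) / (-px Y z)
        + (1 + S z ^ 2) ^ (1 / (2 * lam)) * px (px Y) z / px Y z ^ 2 :=
    fderiv_rpow_div _ hSd hYxd hY0 (1, 0)
  have hpow : (1 + S z ^ 2) ^ (1 / (2 * lam))
      = (1 + S z ^ 2) ^ (1 / (2 * lam) - 1) * (1 + S z ^ 2) := by
    rw [Real.rpow_sub_one (by positivity)]
    field_simp
  have hSz : pt u z - c (u z) * px u z = S z := rfl
  change pt (fun p => (1 + S p ^ 2) ^ (1 / (2 * lam)) / (-px Y p)) z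
    + c (u z) * px (fun p => (1 + S p ^ 2) ^ (1 / (2 * lam)) / (-px Y p)) z = _
  rw [hqt, hqx, hpow, hSz]
  have hut' : pt u z = S z + c (u z) * px u z := by rw [← hSz]; ring
  have hpS : pt S z = deriv c (u z) * px u z *
      (2 * lam * c (u z) * px u z - (pt u z + c (u z) * px u z)) - c (u z) * px S z := by
    linear_combination hDS
  have hpY : pt (px Y) z = -(c (u z) * px (px Y) z + deriv c (u z) * px u z * px Y z) := by
    linear_combination hDY
  rw [hpS, hpY, hut']
  -- The power is now a common factor, so the rest is an identity of rational functions.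
  generalize (1 + S z ^ 2) ^ (1 / (2 * lam) - 1) = P
  field_simp
  ring
end
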